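/- Let k = k(n) → ∞ with k = o(n), let (w_i)_{i∈[n]} satisfy Assumption 1 and the community weights satisfy Assumption 2. Under the alternative model H₁, the variance of the weighted triangle statistic satisfies Var₁(W) = O(k) as n → ∞. -/

import Mathlib

open MeasureTheory ProbabilityTheory Filter Finset Asymptotics
open scoped Topology ENNReal NNReal Classical

noncomputable section

/-- The torus distance on `[0,1]^d`:
`‖x - y‖ = sup_i min (|x i - y i|) (1 - |x i - y i|)`. -/
def torusDist (d : ℕ) (x y : Fin d → ℝ) : ℝ :=
  ⨆ i : Fin d, min |x i - y i| (1 - |x i - y i|)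

/-- The uniform probability measure on `[0,1]`. -/
def unifI : Measure ℝ := volume.restrict (Set.Icc 0 1)

/-- The uniform probability measure on the cube `[0,1]^d`. -/
def unifCube (d : ℕ) : Measure (Fin d → ℝ) := volume.restrict (Set.Icc 0 1)

/-- Assumption 1: the empirical weight distribution has a power-law tail,
`1 - F_n(x) = C x^(1-τ) (1 + o(1))` uniformly for `w0 ≤ x ≤ n^(1/(τ-1)) / log n`. -/
def Assumption1 (τ C w0 : ℝ) (w : (n : ℕ) → Fin n → ℝ) : Prop :=
  ∀ ε > (0:ℝ), ∃ N : ℕ, ∀ n ≥ N, ∀ x : ℝ, w0 ≤ x →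
    x ≤ (n : ℝ) ^ ((1:ℝ) / (τ - 1)) / Real.log n →
    |((univ.filter fun i : Fin n => x < w n i).card : ℝ) / n - C * x ^ (1 - τ)|
      ≤ ε * (C * x ^ (1 - τ))

/-- Assumption 2: the empirical distribution of the community weights has a power-law tail,
`1 - F_k(x) = C x^(1-τ) (1 + o(1))` for `w0 ≤ x = O(k^(1/(τ-1)) / log k)`.
The community consists of the vertices `i` with `i.val < k n`. -/
def Assumption2 (τ C w0 : ℝ) (k : ℕ → ℕ) (w : (n : ℕ) → Fin n → ℝ) : Prop :=
  ∀ A > (0:ℝ), ∀ ε > (0:ℝ), ∃ N : ℕ, ∀ n ≥ N, ∀ x : ℝ, w0 ≤ x →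
    x ≤ A * (k n : ℝ) ^ ((1:ℝ) / (τ - 1)) / Real.log (k n) →
    |((univ.filter fun i : Fin n => i.val < k n ∧ x < w n i).card : ℝ) / (k n)
      - C * x ^ (1 - τ)| ≤ ε * (C * x ^ (1 - τ))

/-- `μ = E[X] = C (τ-1)/(τ-2) w₀^(2-τ)`, the mean of the Pareto distribution. -/
def muPar (τ C w0 : ℝ) : ℝ := C * (τ - 1) / (τ - 2) * w0 ^ (2 - τ)

/-- IRG connection probability `p_{ij} = min (w_i w_j / (μ n)) 1`. -/
def pIRG (n : ℕ) (μ : ℝ) (w : Fin n → ℝ) (i j : Fin n) : ℝ :=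
  min (w i * w j / (μ * n)) 1

/-- The correction constant `C₁ = (1 + (γ-1)⁻¹) 2^d`. -/
def C1 (d : ℕ) (γ : ℝ) : ℝ := (1 + (γ - 1)⁻¹) * 2 ^ d

/-- The geometric (GIRG) connection probability
`min (w_i w_j / (μ k ‖x-y‖^d)) 1 ^ γ` (without the correction factor). -/
def pGIRG (k d : ℕ) (γ μ wi wj : ℝ) (x y : Fin d → ℝ) : ℝ :=
  (min (wi * wj / (μ * k * torusDist d x y ^ d)) 1) ^ γ

/-- The connection probability under the alternative model `H₁`: type-B vertices are the
vertices `i` with `i.val < k`; two type-B vertices use the geometric rule, any other pair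
uses the IRG rule; both carry the correction factor `(1 + C₁)⁻¹`. -/
def pH1 (n k d : ℕ) (γ μ : ℝ) (w : Fin n → ℝ) (pos : Fin n → Fin d → ℝ) (i j : Fin n) : ℝ :=
  if i.val < k ∧ j.val < k then
    (1 + C1 d γ)⁻¹ * pGIRG k d γ μ (w i) (w j) (pos i) (pos j)
  else (1 + C1 d γ)⁻¹ * pIRG n μ w i j

/-- Sample space of the alternative model: a uniform position on the torus for every vertex
(only those of the community members are used) and an independent uniform `[0,1]` variable
for every pair of vertices, generating the conditionally independent edge indicators. -/
abbrev H1Space (n d : ℕ) := (Fin n → Fin d → ℝ) × (Fin n → Fin n → ℝ)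

/-- The law `P₁` of the alternative model (positions and edge-generating uniforms). -/
def H1Measure (n d : ℕ) : Measure (H1Space n d) :=
  (Measure.pi fun _ : Fin n => unifCube d).prod
    (Measure.pi fun _ : Fin n => Measure.pi fun _ : Fin n => unifI)

/-- Under `H₁`, the edge `{i,j}` is present iff the uniform variable attached to the pair
`{i,j}` is at most `p_{ij}` (which depends on the positions); no self-loops. -/
def edgeH1 (n k d : ℕ) (γ μ : ℝ) (w : Fin n → ℝ) (ω : H1Space n d) (i j : Fin n) : Prop :=
  i ≠ j ∧ ω.2 (min i j) (max i j) ≤ pH1 n k d γ μ w ω.1 i j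

def triH1 (n k d : ℕ) (γ μ : ℝ) (w : Fin n → ℝ) (ω : H1Space n d) (a b c : Fin n) : Prop :=
  edgeH1 n k d γ μ w ω a b ∧ edgeH1 n k d γ μ w ω b c ∧ edgeH1 n k d γ μ w ω c a

/-- The weighted triangle statistic under `H₁`. -/
def WH1 (n k d : ℕ) (γ μ : ℝ) (w : Fin n → ℝ) (ω : H1Space n d) : ℝ :=
  ∑ a : Fin n, ∑ b : Fin n, ∑ c : Fin n,
    if triH1 n k d γ μ w ω a b c then (w a * w b * w c)⁻¹ else 0

/-- The local weighted triangle statistic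
`W(a) = (n / w_a²) Σ_{b,c} (w_b w_c)⁻¹ 1{a,b,c triangle}`. -/
def WlocH1 (n k d : ℕ) (γ μ : ℝ) (w : Fin n → ℝ) (a : Fin n) (ω : H1Space n d) : ℝ :=
  ((n : ℝ) / w a ^ 2) * ∑ b : Fin n, ∑ c : Fin n,
    if triH1 n k d γ μ w ω a b c then (w b * w c)⁻¹ else 0

lemma min_abs_le_torusDist (d : ℕ) (x y : Fin d → ℝ) (i : Fin d) :
    min |x i - y i| (1 - |x i - y i|) ≤ torusDist d x y :=
  le_ciSup (f := fun i : Fin d => min |x i - y i| (1 - |x i - y i|)) (Set.finite_range _).bddAbove i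

lemma torusDist_comm (d : ℕ) (x y : Fin d → ℝ) : torusDist d x y = torusDist d y x := by
  simp only [torusDist, abs_sub_comm]

lemma torusDist_nonneg {d : ℕ} {x y : Fin d → ℝ} (hx : x ∈ Set.Icc 0 1) (hy : y ∈ Set.Icc 0 1) :
    0 ≤ torusDist d x y := by
  refine Real.iSup_nonneg fun i => le_min (abs_nonneg _) ?_
  have h1 := hx.1 i
  have h2 := hx.2 i
  have h3 := hy.1 i
  have h4 := hy.2 i
  simp only [Pi.zero_apply, Pi.one_apply] at h1 h2 h3 h4
  rw [sub_nonneg, abs_le]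
  constructor <;> linarith

lemma measurable_torusDist (d : ℕ) :
    Measurable fun z : (Fin d → ℝ) × (Fin d → ℝ) => torusDist d z.1 z.2 := by
  unfold torusDist
  refine Measurable.iSup fun i => ?_
  fun_prop

/-- A ball of radius `ρ` in the one-dimensional torus has length at most `4 ρ`. -/
lemma unifI_torusBall_le {x ρ : ℝ} (hx : x ∈ Set.Icc (0 : ℝ) 1) (hρ : 0 < ρ) :
    unifI {y | min |x - y| (1 - |x - y|) < ρ} ≤ ENNReal.ofReal (4 * ρ) := by
  have hsub : {y | min |x - y| (1 - |x - y|) < ρ} ∩ Set.Icc 0 1 ⊆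
      (Set.Ioo (x - ρ) (x + ρ) ∪ Set.Icc 0 ρ) ∪ Set.Icc (1 - ρ) 1 := by
    rintro y ⟨hy, hy0, hy1⟩
    simp only [Set.mem_ofPred_eq, min_lt_iff] at hy
    rcases hy with hy | hy
    · rw [abs_lt] at hy
      exact Or.inl (Or.inl ⟨by linarith, by linarith⟩)
    · have : 1 - ρ < |x - y| := by linarith
      rcases lt_abs.1 this with h | h
      · exact Or.inl (Or.inr ⟨hy0, by linarith [hx.2]⟩)
      · exact Or.inr ⟨by linarith [hx.1], hy1⟩
  have hms : MeasurableSet {y : ℝ | min |x - y| (1 - |x - y|) < ρ} :=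
    measurableSet_lt (by fun_prop) measurable_const
  rw [unifI, Measure.restrict_apply hms]
  calc volume ({y | min |x - y| (1 - |x - y|) < ρ} ∩ Set.Icc 0 1)
      ≤ volume ((Set.Ioo (x - ρ) (x + ρ) ∪ Set.Icc 0 ρ) ∪ Set.Icc (1 - ρ) 1) := measure_mono hsub
    _ ≤ (volume (Set.Ioo (x - ρ) (x + ρ)) + volume (Set.Icc 0 ρ)) + volume (Set.Icc (1 - ρ) 1) :=
        (measure_union_le _ _).trans (by gcongr; exact measure_union_le _ _)
    _ = ENNReal.ofReal (4 * ρ) := by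
        rw [Real.volume_Ioo, Real.volume_Icc, Real.volume_Icc,
          ← ENNReal.ofReal_add (by linarith) (by linarith),
          ← ENNReal.ofReal_add (by linarith) (by linarith)]
        congr 1
        ring

instance : IsProbabilityMeasure unifI := ⟨by simp [unifI]⟩

lemma unifCube_eq_pi (d : ℕ) : unifCube d = Measure.pi fun _ : Fin d => unifI := by
  unfold unifCube unifI
  rw [← Measure.restrict_pi_pi, ← volume_pi]
  congr 1
  ext x
  simp [Set.mem_Icc, Pi.le_def]

instance (d : ℕ) : IsProbabilityMeasure (unifCube d) := by
  rw [unifCube_eq_pi]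
  infer_instance

/-- A ball of volume scale `t` in the `d`-dimensional torus has volume at most `4 ^ d t`. -/
lemma unifCube_torusBall_le {d : ℕ} (hd : 1 ≤ d) {x : Fin d → ℝ} (hx : x ∈ Set.Icc 0 1) {t : ℝ}
    (ht : 0 < t) :
    unifCube d {y | torusDist d x y ^ d < t} ≤ ENNReal.ofReal (4 ^ d * t) := by
  have hd0 : (d : ℝ) ≠ 0 := by positivity
  set ρ : ℝ := t ^ ((d : ℝ)⁻¹) with hρ
  have hρ0 : 0 < ρ := Real.rpow_pos_of_pos ht _
  have hρd : ρ ^ d = t := Real.rpow_inv_natCast_pow ht.le (by omega)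
  have hsub : {y | torusDist d x y ^ d < t} ⊆
      Set.univ.pi fun i => {u : ℝ | min |x i - u| (1 - |x i - u|) < ρ} := by
    intro y hy i _
    refine (min_abs_le_torusDist d x y i).trans_lt ?_
    exact lt_of_pow_lt_pow_left₀ d hρ0.le (hρd ▸ hy)
  calc unifCube d {y | torusDist d x y ^ d < t}
      ≤ unifCube d (Set.univ.pi fun i => {u : ℝ | min |x i - u| (1 - |x i - u|) < ρ}) :=
        measure_mono hsub
    _ = ∏ i : Fin d, unifI {u : ℝ | min |x i - u| (1 - |x i - u|) < ρ} := by
        rw [unifCube_eq_pi, Measure.pi_pi]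
    _ ≤ ∏ _i : Fin d, ENNReal.ofReal (4 * ρ) :=
        Finset.prod_le_prod' fun i _ => unifI_torusBall_le ⟨hx.1 i, hx.2 i⟩ hρ0
    _ = ENNReal.ofReal (4 ^ d * t) := by
        rw [Finset.prod_const, Finset.card_univ, Fintype.card_fin,
          ← ENNReal.ofReal_pow (by positivity),
          mul_pow, hρd]

lemma min_rpow_le_tsum {γ : ℝ} (hγ : 1 < γ) {s r : ℝ} (hs : 0 < s) (hr : 0 ≤ r) :
    ENNReal.ofReal ((min (s / r) 1) ^ γ) ≤
      ∑' j : ℕ, Set.indicator {r | r < 2 ^ (j + 1) * s}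
        (fun _ => ENNReal.ofReal (2 ^ (-(j * γ)))) r := by
  rcases hr.eq_or_lt with rfl | hr
  · simp [Real.zero_rpow (by linarith : γ ≠ 0)]
  rcases lt_or_ge r s with h | h
  · refine le_trans ?_ (ENNReal.le_tsum 0)
    rw [Set.indicator_of_mem (by simp; linarith)]
    simp only [Nat.cast_zero, zero_mul, neg_zero, Real.rpow_zero]
    gcongr
    exact Real.rpow_le_one (by positivity) (min_le_right _ _) (by linarith)
  · obtain ⟨j, hj1, hj2⟩ := exists_nat_pow_near (x := r / s) (by rwa [one_le_div hs]) (one_lt_two)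
    refine le_trans ?_ (ENNReal.le_tsum j)
    rw [Set.indicator_of_mem (by simpa using (div_lt_iff₀ hs).1 hj2)]
    gcongr
    rw [neg_mul_eq_neg_mul, Real.rpow_mul (by norm_num)]
    gcongr
    refine (min_le_left _ _).trans ?_
    rw [Real.rpow_neg (by norm_num), Real.rpow_natCast, ← inv_div]
    gcongr

lemma exists_lintegral_pGIRG_le {d : ℕ} (hd : 1 ≤ d) {γ : ℝ} (hγ : 1 < γ) :
    ∃ G : ℝ, 0 < G ∧ ∀ s : ℝ, 0 < s → ∀ x ∈ Set.Icc (0 : Fin d → ℝ) 1,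
      ∫⁻ y, ENNReal.ofReal ((min (s / torusDist d x y ^ d) 1) ^ γ) ∂unifCube d
        ≤ ENNReal.ofReal (G * s) := by
  have h2 : (2 : ℝ) ^ (1 - γ) < 1 := Real.rpow_lt_one_of_one_lt_of_neg (by norm_num) (by linarith)
  have h20 : (0 : ℝ) < 2 ^ (1 - γ) := by positivity
  refine ⟨2 * 4 ^ d * (1 - 2 ^ (1 - γ))⁻¹, by have := sub_pos.2 h2; positivity, ?_⟩
  intro s hs x hx
  have hmeas : Measurable fun y => torusDist d x y ^ d :=
    ((measurable_torusDist d).comp (measurable_const.prodMk measurable_id)).pow_const d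
  have hms : ∀ j : ℕ, MeasurableSet {y | torusDist d x y ^ d < 2 ^ (j + 1) * s} := fun j =>
    measurableSet_lt hmeas measurable_const
  calc ∫⁻ y, ENNReal.ofReal ((min (s / torusDist d x y ^ d) 1) ^ γ) ∂unifCube d
      ≤ ∫⁻ y, ∑' j : ℕ, Set.indicator {y | torusDist d x y ^ d < 2 ^ (j + 1) * s}
          (fun _ => ENNReal.ofReal (2 ^ (-(j * γ)))) y ∂unifCube d := by
        refine lintegral_mono_ae ?_
        have : ∀ᵐ y ∂unifCube d, y ∈ Set.Icc (0 : Fin d → ℝ) 1 :=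
          ae_restrict_mem measurableSet_Icc
        filter_upwards [this] with y hy
        exact min_rpow_le_tsum hγ hs (pow_nonneg (torusDist_nonneg hx hy) d)
    _ = ∑' j : ℕ, ENNReal.ofReal (2 ^ (-(j * γ))) *
          unifCube d {y | torusDist d x y ^ d < 2 ^ (j + 1) * s} := by
        rw [lintegral_tsum fun j => (measurable_const.indicator (hms j)).aemeasurable]
        congr 1
        ext j
        rw [lintegral_indicator_const (hms j)]
    _ ≤ ∑' j : ℕ, ENNReal.ofReal (2 * 4 ^ d * s * (2 ^ (1 - γ)) ^ j) := by
        refine ENNReal.tsum_le_tsum fun j => ?_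
        calc _ ≤ ENNReal.ofReal (2 ^ (-(j * γ))) * ENNReal.ofReal (4 ^ d * (2 ^ (j + 1) * s)) := by
              gcongr
              exact unifCube_torusBall_le hd hx (by positivity)
          _ = _ := by
              rw [← ENNReal.ofReal_mul (by positivity)]
              congr 1
              rw [← Real.rpow_natCast (2 ^ (1 - γ)) j, ← Real.rpow_mul (by norm_num),
                show (1 - γ) * (j : ℝ) = j + -(j * γ) by ring, Real.rpow_add (by norm_num),
                Real.rpow_natCast]
              ring
    _ = ENNReal.ofReal (2 * 4 ^ d * (1 - 2 ^ (1 - γ))⁻¹ * s) := by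
        rw [← ENNReal.ofReal_tsum_of_nonneg (fun j => by positivity)
          ((summable_geometric_of_lt_one h20.le h2).mul_left _), tsum_mul_left,
          tsum_geometric_of_lt_one h20.le h2]
        congr 1
        ring

/-- Control of the weights of the vertices in `S`, at the scale `N`: few of them exceed `√N`,
and the others have a bounded average. -/
structure HubBound {ι : Type*} (S : Finset ι) (w : ι → ℝ) (N M : ℝ) : Prop where
  card_hub_le : (#{i ∈ S | √N < w i} : ℝ) ≤ M * √N
  sum_le : ∑ i ∈ S with w i ≤ √N, w i ≤ M * N

lemma le_dyadic_sum {w0 u : ℝ} (hw0 : 0 < w0) (hu : w0 ≤ u) {L : ℕ} (hL : u ≤ w0 * 2 ^ L) :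
    u ≤ 2 * w0 + 4 * ∑ j ∈ range L, if w0 * 2 ^ j < u then w0 * 2 ^ j else 0 := by
  have hnn : ∀ j ∈ range L, 0 ≤ if w0 * 2 ^ j < u then w0 * 2 ^ j else 0 := fun j _ => by
    split_ifs <;> positivity
  obtain ⟨J, hJ1, hJ2⟩ := exists_nat_pow_near (x := u / w0) ((one_le_div hw0).2 hu) one_lt_two
  rw [le_div_iff₀ hw0] at hJ1
  rw [div_lt_iff₀ hw0] at hJ2
  cases J with
  | zero =>
    norm_num at hJ2
    linarith [Finset.sum_nonneg hnn]
  | succ J =>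
    have h1 : w0 * 2 ^ J < u := by
      have : (0 : ℝ) < w0 * 2 ^ J := by positivity
      rw [pow_succ] at hJ1
      linarith
    have hJL : J < L := by
      have : w0 * (2 : ℝ) ^ J < w0 * 2 ^ L := h1.trans_le hL
      exact (pow_lt_pow_iff_right₀ (one_lt_two : (1 : ℝ) < 2)).1 (lt_of_mul_lt_mul_left this hw0.le)
    have h2 := Finset.single_le_sum hnn (mem_range.2 hJL)
    rw [if_pos h1] at h2
    rw [pow_succ, pow_succ] at hJ2
    linarith

lemma hubBound_of_tail {ι : Type*} (S : Finset ι) (w : ι → ℝ) {τ w0 D N : ℝ} (hτ : 2 < τ)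
    (hw0 : 0 < w0) (hD : 0 ≤ D) (hN : 1 ≤ N) (hw : ∀ i ∈ S, w0 ≤ w i) (hS : (#S : ℝ) ≤ N)
    (hw0N : w0 ≤ √N)
    (htail : ∀ x, w0 ≤ x → x ≤ √N → (#{i ∈ S | x < w i} : ℝ) ≤ D * (N * x ^ (1 - τ))) :
    HubBound S w N (D + (2 * w0 + 4 * (D * w0 ^ (2 - τ) * (1 - 2 ^ (2 - τ))⁻¹))) := by
  have hN0 : 0 < N := by linarith
  have h2 : (2 : ℝ) ^ (2 - τ) < 1 := Real.rpow_lt_one_of_one_lt_of_neg (by norm_num) (by linarith)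
  have h20 : (0 : ℝ) < 2 ^ (2 - τ) := by positivity
  have hsub := sub_pos.2 h2
  refine ⟨?_, ?_⟩
  · have h1 : N * √N ^ (1 - τ) ≤ √N := by
      have hs : 1 ≤ √N := Real.one_le_sqrt.2 hN
      calc N * √N ^ (1 - τ) ≤ N * √N ^ (-1 : ℝ) := by
            gcongr
            linarith
        _ = √N := by
            rw [Real.rpow_neg_one]
            nth_rw 1 [← Real.mul_self_sqrt hN0.le]
            field_simp
    calc _ ≤ D * (N * √N ^ (1 - τ)) := htail _ hw0N le_rfl
      _ ≤ D * √N := by gcongr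
      _ ≤ _ := by
        gcongr
        have : 0 ≤ 2 * w0 + 4 * (D * w0 ^ (2 - τ) * (1 - 2 ^ (2 - τ))⁻¹) := by positivity
        linarith
  · obtain ⟨L, hL⟩ := pow_unbounded_of_one_lt (√N / w0) one_lt_two
    rw [div_lt_iff₀ hw0] at hL
    have hterm : ∀ j : ℕ, ∑ i ∈ S with w i ≤ √N, (if w0 * 2 ^ j < w i then w0 * 2 ^ j else 0)
        ≤ D * N * w0 ^ (2 - τ) * (2 ^ (2 - τ)) ^ j := by
      intro j
      have hr : w0 ^ (2 - τ) * (2 ^ (2 - τ)) ^ j = (w0 * 2 ^ j) * (w0 * 2 ^ j) ^ (1 - τ) := by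
        rw [← Real.rpow_one_add' (by positivity) (by linarith),
            Real.mul_rpow hw0.le (by positivity),
          ← Real.rpow_natCast, ← Real.rpow_natCast, ← Real.rpow_mul (by norm_num),
          ← Real.rpow_mul (by norm_num)]
        ring_nf
      by_cases hj : w0 * 2 ^ j ≤ √N
      · rw [← Finset.sum_filter, Finset.sum_const, nsmul_eq_mul]
        have h3 : (#{i ∈ {i ∈ S | w i ≤ √N} | w0 * 2 ^ j < w i} : ℝ) ≤
            #{i ∈ S | w0 * 2 ^ j < w i} := by
          exact_mod_cast card_le_card (filter_subset_filter _ (filter_subset _ _))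
        calc _ ≤ (D * (N * (w0 * 2 ^ j) ^ (1 - τ))) * (w0 * 2 ^ j) := by
              gcongr
              exact h3.trans (htail _ (le_mul_of_one_le_right hw0.le (one_le_pow₀ one_le_two)) hj)
          _ = D * N * ((w0 * 2 ^ j) * (w0 * 2 ^ j) ^ (1 - τ)) := by ring
          _ = _ := by rw [← hr]; ring
      · rw [Finset.sum_eq_zero]
        · positivity
        · intro i hi
          rw [if_neg]
          have := (mem_filter.1 hi).2
          linarith
    calc ∑ i ∈ S with w i ≤ √N, w i
        ≤ ∑ i ∈ S with w i ≤ √N,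
            (2 * w0 + 4 * ∑ j ∈ range L, if w0 * 2 ^ j < w i then w0 * 2 ^ j else 0) := by
          refine Finset.sum_le_sum fun i hi => ?_
          rw [mem_filter] at hi
          exact le_dyadic_sum hw0 (hw i hi.1) (by linarith)
      _ = #{i ∈ S | w i ≤ √N} * (2 * w0) + 4 * ∑ j ∈ range L,
            ∑ i ∈ S with w i ≤ √N, (if w0 * 2 ^ j < w i then w0 * 2 ^ j else 0) := by
          rw [Finset.sum_add_distrib, Finset.sum_const, nsmul_eq_mul, ← Finset.mul_sum,
            Finset.sum_comm]
      _ ≤ N * (2 * w0) + 4 * ∑ j ∈ range L, D * N * w0 ^ (2 - τ) * (2 ^ (2 - τ)) ^ j := by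
          gcongr with j
          · exact le_trans (by exact_mod_cast card_le_card (filter_subset _ _)) hS
          · exact hterm j
      _ ≤ N * (2 * w0) + 4 * (D * N * w0 ^ (2 - τ) * (1 - 2 ^ (2 - τ))⁻¹) := by
          rw [← Finset.mul_sum]
          gcongr
          rw [← tsum_geometric_of_lt_one h20.le h2]
          exact (summable_geometric_of_lt_one h20.le h2).sum_le_tsum _ fun _ _ => by positivity
      _ ≤ _ := by nlinarith [mul_nonneg hD hN0.le]

lemma eventually_sqrt_le_rpow_div_log {τ : ℝ} (hτ1 : 2 < τ) (hτ2 : τ < 3) :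
    ∀ᶠ x : ℝ in atTop, √x ≤ x ^ (1 / (τ - 1)) / Real.log x := by
  have hpos : 0 < 1 / (τ - 1) - 1 / 2 := by
    rw [sub_pos]
    exact one_div_lt_one_div_of_lt (by linarith) (by linarith)
  have h := (isLittleO_log_rpow_atTop hpos).bound one_pos
  filter_upwards [h, eventually_gt_atTop 1] with x hx hx1
  have hx0 : 0 < x := by linarith
  have hl : 0 < Real.log x := Real.log_pos hx1
  rw [Real.norm_of_nonneg hl.le, Real.norm_of_nonneg (by positivity), one_mul] at hx
  rw [le_div_iff₀ hl, Real.sqrt_eq_rpow]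
  calc x ^ (1 / 2 : ℝ) * Real.log x ≤ x ^ (1 / 2 : ℝ) * x ^ (1 / (τ - 1) - 1 / 2) := by gcongr
    _ = x ^ (1 / (τ - 1)) := by rw [← Real.rpow_add hx0]; congr 1; ring

lemma card_le_of_abs_tail {m N y : ℝ} (hN : 0 < N) (h : |m / N - y| ≤ 1 * y) :
    m ≤ 2 * (N * y) := by
  have := (abs_le.1 h).2
  have h2 : m / N ≤ 2 * y := by linarith
  rw [div_le_iff₀ hN] at h2
  linarith

lemma exists_hubBound {τ C w0 : ℝ} (hτ1 : 2 < τ) (hτ2 : τ < 3) (hC : 0 < C) (hw0 : 0 < w0)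
    {k : ℕ → ℕ} (hkn : ∀ n, k n ≤ n) (hkinf : Tendsto (fun n => k n) atTop atTop)
    {w : (n : ℕ) → Fin n → ℝ} (hww0 : ∀ n (i : Fin n), w0 ≤ w n i)
    (hA1 : Assumption1 τ C w0 w) (hA2 : Assumption2 τ C w0 k w) :
    ∃ M : ℝ, 0 < M ∧ ∀ᶠ n in atTop, HubBound (univ : Finset (Fin n)) (w n) n M ∧
      HubBound (univ.filter fun i : Fin n => i.val < k n) (w n) (k n) M := by
  have h20 : (2 : ℝ) ^ (2 - τ) < 1 := Real.rpow_lt_one_of_one_lt_of_neg (by norm_num) (by linarith)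
  have hsub := sub_pos.2 h20
  refine ⟨2 * C + (2 * w0 + 4 * (2 * C * w0 ^ (2 - τ) * (1 - 2 ^ (2 - τ))⁻¹)), by positivity, ?_⟩
  obtain ⟨N1, hN1⟩ := hA1 1 one_pos
  obtain ⟨N2, hN2⟩ := hA2 1 one_pos 1 one_pos
  have hk : Tendsto (fun n => (k n : ℝ)) atTop atTop := tendsto_natCast_atTop_atTop.comp hkinf
  have hev := (eventually_sqrt_le_rpow_div_log hτ1 hτ2).and
    ((eventually_ge_atTop 1).and (Real.tendsto_sqrt_atTop.eventually_ge_atTop w0))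
  filter_upwards [eventually_ge_atTop N1, eventually_ge_atTop N2,
    tendsto_natCast_atTop_atTop.eventually hev, hk.eventually hev]
    with n hn1 hn2 ⟨hn3, hn4, hn5⟩ ⟨hk3, hk4, hk5⟩
  constructor
  · refine hubBound_of_tail _ _ hτ1 hw0 (by positivity) hn4 (fun i _ => hww0 n i) (by simp) hn5 ?_
    intro x hx1 hx2
    have := card_le_of_abs_tail (by linarith) (hN1 n hn1 x hx1 (hx2.trans hn3))
    linarith
  · refine hubBound_of_tail _ _ hτ1 hw0 (by positivity) hk4 (fun i _ => hww0 n i) ?_ hk5 ?_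
    · simp [Fin.card_filter_val_lt, hkn n]
    · intro x hx1 hx2
      have := card_le_of_abs_tail (by linarith)
        (hN2 n hn2 x hx1 (by rw [one_mul]; exact hx2.trans hk3))
      rw [filter_filter]
      linarith

lemma lintegral_mul_le_of_update {ι E : Type*} [Fintype ι] [DecidableEq ι] [MeasurableSpace E]
    (ν : Measure E) [IsProbabilityMeasure ν] {f g : (ι → E) → ℝ≥0∞} (hf : Measurable f)
    (hg : Measurable g) (c : ι) (hfc : ∀ x y, f (Function.update x c y) = f x) {Q : ℝ≥0∞}
    (hgc : ∀ x, ∫⁻ y, g (Function.update x c y) ∂ν ≤ Q) :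
    ∫⁻ x, f x * g x ∂(Measure.pi fun _ : ι => ν) ≤
      (∫⁻ x, f x ∂(Measure.pi fun _ : ι => ν)) * Q := by
  rw [← lintegral_mul_const _ hf]
  refine lintegral_le_of_lmarginal_le {c} (hf.mul hg) (hf.mul_const Q) ?_
  rw [lmarginal_singleton, lmarginal_singleton]
  intro x
  simp only [hfc]
  have hgm : Measurable fun y => g (Function.update x c y) := hg.comp (measurable_update x)
  rw [lintegral_const_mul _ hgm, lintegral_const, measure_univ, mul_one]
  gcongr
  exact hgc x

lemma lintegral_mul_eq_of_dependsOn {ι E : Type*} [Fintype ι] [MeasurableSpace E]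
    (ν : Measure E) [IsProbabilityMeasure ν] {f g : (ι → E) → ℝ≥0∞} (hf : Measurable f)
    (hg : Measurable g) {S T : Finset ι} (hST : Disjoint S T) (hfS : DependsOn f S)
    (hgT : DependsOn g T) :
    ∫⁻ x, f x * g x ∂(Measure.pi fun _ : ι => ν) =
      (∫⁻ x, f x ∂(Measure.pi fun _ : ι => ν)) * ∫⁻ x, g x ∂(Measure.pi fun _ : ι => ν) := by
  obtain ⟨e⟩ : Nonempty E := nonempty_of_isProbabilityMeasure ν
  have hind : iIndepFun (fun i (x : ι → E) => x i) (Measure.pi fun _ : ι => ν) :=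
    iIndepFun_pi (X := fun _ : ι => (id : E → E)) fun _ => aemeasurable_id
  have h := hind.indepFun_finset S T hST fun i => measurable_pi_apply i
  have key : ∀ (U : Finset ι) (φ : (ι → E) → ℝ≥0∞), Measurable φ → DependsOn φ U →
      ∃ ψ : (U → E) → ℝ≥0∞, Measurable ψ ∧ φ = ψ ∘ fun x i => x i := by
    intro U φ hφ hU
    refine ⟨fun z => φ fun i => if hi : i ∈ U then z ⟨i, hi⟩ else e, ?_, ?_⟩
    · refine hφ.comp (measurable_pi_lambda _ fun i => ?_)
      by_cases hi : i ∈ U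
      · simpa [hi] using measurable_pi_apply _
      · simp [hi]
    · ext x
      refine hU fun i hi => ?_
      simp [Finset.mem_coe.1 hi]
  obtain ⟨φ, hφ, rfl⟩ := key S f hf hfS
  obtain ⟨ψ, hψ, rfl⟩ := key T g hg hgT
  exact lintegral_mul_eq_lintegral_mul_lintegral_of_indepFun hf hg (h.comp hφ hψ)

/-- The event that every pair in `s` is present: the uniform variable of the pair is at most
its connection probability, which depends on the positions. -/
def edgesPresent {V E : Type*} [LinearOrder V] (p : (V → E) → V → V → ℝ) (s : Finset (Sym2 V)) :
    Set ((V → E) × (V → V → ℝ)) :=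
  {ω | ∀ e ∈ s, ω.2 e.inf e.sup ≤ p ω.1 e.inf e.sup}

lemma unifI_Iic {t : ℝ} (h1 : t ≤ 1) : unifI (Set.Iic t) = ENNReal.ofReal t := by
  rw [unifI, Measure.restrict_apply measurableSet_Iic]
  have : Set.Iic t ∩ Set.Icc 0 1 = Set.Icc 0 t := by
    ext u
    simp only [Set.mem_inter_iff, Set.mem_Iic, Set.mem_Icc]
    constructor
    · rintro ⟨h, h', -⟩
      exact ⟨h', h⟩
    · rintro ⟨h, h'⟩
      exact ⟨h', h, h'.trans h1⟩
  rw [this, Real.volume_Icc, sub_zero]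

section Edges

variable {V E : Type*} [LinearOrder V] [MeasurableSpace E]

lemma measurableSet_edgesPresent {p : (V → E) → V → V → ℝ}
    (hm : ∀ i j, Measurable fun x => p x i j) (s : Finset (Sym2 V)) :
    MeasurableSet (edgesPresent p s) := by
  have : edgesPresent p s = ⋂ e ∈ s, {ω | ω.2 e.inf e.sup ≤ p ω.1 e.inf e.sup} := by
    ext ω
    simp [edgesPresent]
  rw [this]
  refine s.measurableSet_biInter fun e _ => measurableSet_le ?_ ((hm _ _).comp measurable_fst)
  fun_prop

lemma measure_edgesPresent [Fintype V] (π : Measure (V → E)) {p : (V → E) → V → V → ℝ}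
    (hm : ∀ i j, Measurable fun x => p x i j)
    (h1 : ∀ x i j, p x i j ≤ 1) (s : Finset (Sym2 V)) :
    (π.prod (Measure.pi fun _ : V => Measure.pi fun _ : V => unifI)) (edgesPresent p s) =
      ∫⁻ x, ∏ e ∈ s, ENNReal.ofReal (p x e.inf e.sup) ∂π := by
  rw [Measure.prod_apply (measurableSet_edgesPresent hm s)]
  congr 1
  ext x
  set s' : Finset (V × V) := s.image fun e => (e.inf, e.sup) with hs'
  have hinj : Set.InjOn (fun e : Sym2 V => (e.inf, e.sup)) s := by
    intro e _ e' _ h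
    rw [Prod.mk.injEq] at h
    exact Sym2.inf_eq_inf_and_sup_eq_sup.1 h
  have hset : Prod.mk x ⁻¹' edgesPresent p s = Set.univ.pi fun i : V => Set.univ.pi fun j : V =>
      if (i, j) ∈ s' then Set.Iic (p x i j) else Set.univ := by
    ext u
    simp only [edgesPresent, Set.mem_preimage, Set.mem_ofPred_eq, Set.mem_pi, Set.mem_univ,
      forall_true_left]
    constructor
    · intro h i j
      split_ifs with hij
      · obtain ⟨e, he, heq⟩ := mem_image.1 hij
        rw [Prod.mk.injEq] at heq
        rw [← heq.1, ← heq.2]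
        exact h e he
      · exact Set.mem_univ _
    · intro h e he
      have := h e.inf e.sup
      rwa [if_pos (mem_image_of_mem (fun e : Sym2 V => (e.inf, e.sup)) he)] at this
  rw [hset, Measure.pi_pi]
  have hfac : ∀ i j : V, unifI (if (i, j) ∈ s' then Set.Iic (p x i j) else Set.univ) =
      if (i, j) ∈ s' then ENNReal.ofReal (p x i j) else 1 := by
    intro i j
    split_ifs
    · exact unifI_Iic (h1 _ _ _)
    · exact measure_univ
  simp only [Measure.pi_pi, hfac]
  rw [← Fintype.prod_prod_type' (f := fun i j =>
    if (i, j) ∈ s' then ENNReal.ofReal (p x i j) else 1)]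
  simp only [Prod.mk.eta]
  rw [Finset.prod_ite_mem, univ_inter, hs', Finset.prod_image hinj]

end Edges

/-- A symmetric random connection rule `p`: the vertices carry independent positions with law `ν`,
the connection probability of a pair depends on the two positions only when both vertices are in
the community `B`, and averaging over one of the two positions leaves at most `q`. -/
structure PositionKernel {V E : Type*} [LinearOrder V] [MeasurableSpace E] (ν : Measure E)
    (B : V → Prop) (q : V → V → ℝ) (p : (V → E) → V → V → ℝ) : Prop where
  measurable : ∀ i j, Measurable fun x => p x i j
  le_one : ∀ x i j, p x i j ≤ 1
  symm : ∀ x i j, p x i j = p x j i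
  congr : ∀ x y i j, (B i → B j → x i = y i ∧ x j = y j) → p x i j = p y i j
  q_nonneg : ∀ i j, 0 ≤ q i j
  q_symm : ∀ i j, q i j = q j i
  le_of_not : ∀ x i j, ¬(B i ∧ B j) → p x i j ≤ q i j
  lintegral_le : ∀ x i j, i ≠ j →
    ∫⁻ y, ENNReal.ofReal (p (Function.update x j y) i j) ∂ν ≤ ENNReal.ofReal (q i j)

/-- A bound for the probability that `c` is adjacent to both `a` and `b`. -/
def wedgeBound {V : Type*} (B : V → Prop) (q : V → V → ℝ) (a b c : V) : ℝ :=
  if ¬B a ∧ ¬B b then q a c * q b c else min (q a c) (q b c)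

/-- A bound for the probability that `i, b, c` is a triangle given the position of `i`. -/
def rootedBound {V : Type*} (q : V → V → ℝ) (i b c : V) : ℝ :=
  q b c * min (q i b) (q i c)

/-- The three edges of a triangle. -/
def triEdges {V : Type*} (T : Fin 3 → V) : Finset (Sym2 V) :=
  {s(T 0, T 1), s(T 0, T 2), s(T 1, T 2)}

namespace PositionKernel

variable {V E : Type*} [LinearOrder V] [MeasurableSpace E] {ν : Measure E}
  {B : V → Prop} {q : V → V → ℝ} {p : (V → E) → V → V → ℝ}

lemma inf_sup (h : PositionKernel ν B q p) (x : V → E) (a b : V) :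
    p x (a ⊓ b) (a ⊔ b) = p x a b := by
  rcases le_total a b with hab | hab
  · rw [inf_eq_left.2 hab, sup_eq_right.2 hab]
  · rw [inf_eq_right.2 hab, sup_eq_left.2 hab, h.symm]

lemma update_of_ne (h : PositionKernel ν B q p) {a b c : V} (hac : a ≠ c) (hbc : b ≠ c) (x : V → E)
    (y : E) : p (Function.update x c y) a b = p x a b :=
  h.congr _ _ _ _ fun _ _ => ⟨Function.update_of_ne hac _ _, Function.update_of_ne hbc _ _⟩

lemma measurable_ofReal (h : PositionKernel ν B q p) (a b : V) :
    Measurable fun x => ENNReal.ofReal (p x a b) := (h.measurable a b).ennreal_ofReal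

lemma ofReal_le_one (h : PositionKernel ν B q p) (x : V → E) (a b : V) :
    ENNReal.ofReal (p x a b) ≤ 1 := ENNReal.ofReal_le_one.2 (h.le_one x a b)

lemma wedgeBound_nonneg (h : PositionKernel ν B q p) (a b c : V) : 0 ≤ wedgeBound B q a b c := by
  unfold wedgeBound
  split_ifs
  · exact mul_nonneg (h.q_nonneg _ _) (h.q_nonneg _ _)
  · exact le_min (h.q_nonneg _ _) (h.q_nonneg _ _)

lemma rootedBound_nonneg (h : PositionKernel ν B q p) (i b c : V) : 0 ≤ rootedBound q i b c :=
  mul_nonneg (h.q_nonneg _ _) (le_min (h.q_nonneg _ _) (h.q_nonneg _ _))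

lemma dependsOn_prod (h : PositionKernel ν B q p) {s : Finset (Sym2 V)} {S : Finset V}
    (hS : ∀ e ∈ s, ∀ i ∈ e, B i → i ∈ S) :
    DependsOn (fun x => ∏ e ∈ s, ENNReal.ofReal (p x e.inf e.sup)) (S : Set V) := by
  intro x y hxy
  refine Finset.prod_congr rfl fun e he => ?_
  have := hS e he
  induction e with | _ a b =>
  simp only [Sym2.inf_mk, Sym2.sup_mk, h.inf_sup]
  rw [h.congr x y a b fun ha hb => ⟨hxy a (this a (by simp) ha), hxy b (this b (by simp) hb)⟩]

/-- The law of the positions and of the uniform variables attached to the pairs. -/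
def law (V : Type*) [Fintype V] {E : Type*} [MeasurableSpace E] (ν : Measure E) :
    Measure ((V → E) × (V → V → ℝ)) :=
  (Measure.pi fun _ : V => ν).prod (Measure.pi fun _ : V => Measure.pi fun _ : V => unifI)

variable [Fintype V]

lemma law_edgesPresent (h : PositionKernel ν B q p) (s : Finset (Sym2 V)) :
    law V ν (edgesPresent p s) =
      ∫⁻ x, ∏ e ∈ s, ENNReal.ofReal (p x e.inf e.sup) ∂(Measure.pi fun _ : V => ν) :=
  measure_edgesPresent _ h.measurable h.le_one s

variable [IsProbabilityMeasure ν]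

lemma lintegral_mul_edge_le (h : PositionKernel ν B q p) {f : (V → E) → ℝ≥0∞} (hf : Measurable f)
    {a c : V} (hac : a ≠ c) (hfc : ∀ x y, f (Function.update x c y) = f x) :
    ∫⁻ x, f x * ENNReal.ofReal (p x a c) ∂(Measure.pi fun _ : V => ν) ≤
      (∫⁻ x, f x ∂(Measure.pi fun _ : V => ν)) * ENNReal.ofReal (q a c) :=
  lintegral_mul_le_of_update ν hf (h.measurable_ofReal a c) c hfc fun x => h.lintegral_le x a c hac

lemma lintegral_edge_le (h : PositionKernel ν B q p) {a c : V} (hac : a ≠ c) :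
    ∫⁻ x, ENNReal.ofReal (p x a c) ∂(Measure.pi fun _ : V => ν) ≤ ENNReal.ofReal (q a c) := by
  simpa using h.lintegral_mul_edge_le (f := fun _ => 1) measurable_const hac fun _ _ => rfl

lemma lintegral_mul_wedge_le (h : PositionKernel ν B q p) {f : (V → E) → ℝ≥0∞} (hf : Measurable f)
    {a b c : V} (hac : a ≠ c) (hbc : b ≠ c) (hfc : ∀ x y, f (Function.update x c y) = f x) :
    ∫⁻ x, f x * (ENNReal.ofReal (p x a c) * ENNReal.ofReal (p x b c)) ∂(Measure.pi fun _ : V => ν) ≤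
      (∫⁻ x, f x ∂(Measure.pi fun _ : V => ν)) * ENNReal.ofReal (wedgeBound B q a b c) := by
  unfold wedgeBound
  split_ifs with hab
  · rw [← lintegral_mul_const _ hf]
    refine lintegral_mono fun x => ?_
    rw [ENNReal.ofReal_mul (h.q_nonneg _ _)]
    gcongr
    · exact h.le_of_not x a c fun hB => hab.1 hB.1
    · exact h.le_of_not x b c fun hB => hab.2 hB.1
  · rcases min_choice (q a c) (q b c) with hm | hm <;> rw [hm]
    · refine le_trans (lintegral_mono fun x => ?_) (h.lintegral_mul_edge_le hf hac hfc)
      gcongr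
      exact mul_le_of_le_one_right' (h.ofReal_le_one x b c)
    · refine le_trans (lintegral_mono fun x => ?_) (h.lintegral_mul_edge_le hf hbc hfc)
      gcongr
      exact mul_le_of_le_one_left' (h.ofReal_le_one x a c)

lemma lintegral_mul_path_le (h : PositionKernel ν B q p) {f : (V → E) → ℝ≥0∞} (hf : Measurable f)
    {i b c : V} (hib : i ≠ b) (hic : i ≠ c) (hbc : b ≠ c)
    (hfb : ∀ x y, f (Function.update x b y) = f x) (hfc : ∀ x y, f (Function.update x c y) = f x) :
    ∫⁻ x, f x * (ENNReal.ofReal (p x i b) * ENNReal.ofReal (p x b c)) ∂(Measure.pi fun _ : V => ν) ≤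
      (∫⁻ x, f x ∂(Measure.pi fun _ : V => ν)) * ENNReal.ofReal (q b c * q i b) := by
  simp only [← mul_assoc]
  refine (h.lintegral_mul_edge_le (hf.mul (h.measurable_ofReal i b)) hbc fun x y => ?_).trans ?_
  · simp only [Pi.mul_apply]
    rw [hfc, h.update_of_ne hic hbc]
  · rw [mul_comm (q b c), ENNReal.ofReal_mul (h.q_nonneg _ _), ← mul_assoc]
    gcongr
    exact h.lintegral_mul_edge_le hf hib hfb

lemma lintegral_mul_rooted_le (h : PositionKernel ν B q p) {f : (V → E) → ℝ≥0∞} (hf : Measurable f)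
    {i b c : V} (hib : i ≠ b) (hic : i ≠ c) (hbc : b ≠ c)
    (hfb : ∀ x y, f (Function.update x b y) = f x) (hfc : ∀ x y, f (Function.update x c y) = f x) :
    ∫⁻ x, f x * (ENNReal.ofReal (p x i b) * (ENNReal.ofReal (p x i c) * ENNReal.ofReal (p x b c)))
        ∂(Measure.pi fun _ : V => ν) ≤
      (∫⁻ x, f x ∂(Measure.pi fun _ : V => ν)) * ENNReal.ofReal (rootedBound q i b c) := by
  unfold rootedBound
  rcases min_choice (q i b) (q i c) with hm | hm <;> rw [hm]
  · refine le_trans (lintegral_mono fun x => ?_) (h.lintegral_mul_path_le hf hib hic hbc hfb hfc)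
    gcongr
    exact mul_le_of_le_one_left' (h.ofReal_le_one x i c)
  · rw [h.q_symm b c]
    refine le_trans (lintegral_mono fun x => ?_)
      (h.lintegral_mul_path_le hf hic hib hbc.symm hfc hfb)
    rw [h.symm x c b]
    refine mul_le_mul' le_rfl ?_
    exact mul_le_of_le_one_left' (h.ofReal_le_one x i b)

instance : IsProbabilityMeasure (law V ν) := by
  unfold law
  infer_instance

lemma law_triangle_le (h : PositionKernel ν B q p) {a b c : V} (hab : a ≠ b) (hac : a ≠ c)
    (hbc : b ≠ c) :
    law V ν (edgesPresent p {s(a, b), s(a, c), s(b, c)}) ≤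
      ENNReal.ofReal (q a b * wedgeBound B q a b c) := by
  rw [h.law_edgesPresent]
  have hprod : ∀ x, ∏ e ∈ ({s(a, b), s(a, c), s(b, c)} : Finset (Sym2 V)),
      ENNReal.ofReal (p x e.inf e.sup) = ENNReal.ofReal (p x a b) *
        (ENNReal.ofReal (p x a c) * ENNReal.ofReal (p x b c)) := by
    intro x
    rw [Finset.prod_insert, Finset.prod_insert, Finset.prod_singleton]
    · simp only [Sym2.inf_mk, Sym2.sup_mk, h.inf_sup]
    all_goals simp [hab, hac, hbc, hab.symm, hbc.symm]
  simp only [hprod]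
  refine (h.lintegral_mul_wedge_le (h.measurable_ofReal a b) hac hbc fun x y => ?_).trans ?_
  · rw [h.update_of_ne hac hbc]
  · rw [ENNReal.ofReal_mul (h.q_nonneg _ _)]
    gcongr
    exact h.lintegral_edge_le hab

lemma law_diamond_le (h : PositionKernel ν B q p) {a b c d : V} (hab : a ≠ b) (hac : a ≠ c)
    (hbc : b ≠ c) (had : a ≠ d) (hbd : b ≠ d) (hcd : c ≠ d) :
    law V ν (edgesPresent p {s(a, b), s(a, c), s(b, c), s(a, d), s(b, d)}) ≤
      ENNReal.ofReal (q a b * wedgeBound B q a b c * wedgeBound B q a b d) := by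
  rw [h.law_edgesPresent]
  have hprod : ∀ x, ∏ e ∈ ({s(a, b), s(a, c), s(b, c), s(a, d), s(b, d)} : Finset (Sym2 V)),
      ENNReal.ofReal (p x e.inf e.sup) = ENNReal.ofReal (p x a b) *
        (ENNReal.ofReal (p x a c) * ENNReal.ofReal (p x b c)) *
        (ENNReal.ofReal (p x a d) * ENNReal.ofReal (p x b d)) := by
    intro x
    rw [Finset.prod_insert, Finset.prod_insert, Finset.prod_insert, Finset.prod_insert,
      Finset.prod_singleton]
    · simp only [Sym2.inf_mk, Sym2.sup_mk, h.inf_sup, mul_assoc]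
    all_goals simp [hab, hac, hbc, had, hbd, hcd, hab.symm, hac.symm, hbc.symm, hbd.symm]
  simp only [hprod]
  have hm := h.measurable_ofReal
  refine (h.lintegral_mul_wedge_le ((hm a b).mul ((hm a c).mul (hm b c))) had hbd
    fun x y => ?_).trans ?_
  · simp only [Pi.mul_apply]
    rw [h.update_of_ne had hbd, h.update_of_ne had hcd, h.update_of_ne hbd hcd]
  rw [ENNReal.ofReal_mul (mul_nonneg (h.q_nonneg _ _) (h.wedgeBound_nonneg _ _ _))]
  gcongr
  refine (h.lintegral_mul_wedge_le (hm a b) hac hbc fun x y => ?_).trans ?_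
  · rw [h.update_of_ne hac hbc]
  · rw [ENNReal.ofReal_mul (h.q_nonneg _ _)]
    gcongr
    exact h.lintegral_edge_le hab

lemma law_bowtie_le (h : PositionKernel ν B q p) {i b c d e : V} (hib : i ≠ b) (hic : i ≠ c)
    (hbc : b ≠ c) (hid : i ≠ d) (hie : i ≠ e) (hde : d ≠ e) (hbd : b ≠ d) (hbe : b ≠ e)
    (hcd : c ≠ d) (hce : c ≠ e) :
    law V ν (edgesPresent p ({s(i, b), s(i, c), s(b, c)} ∪ {s(i, d), s(i, e), s(d, e)})) ≤
      ENNReal.ofReal (rootedBound q i b c * rootedBound q i d e) := by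
  rw [h.law_edgesPresent]
  have hprod : ∀ x, ∏ e ∈ ({s(i, b), s(i, c), s(b, c)} ∪ {s(i, d), s(i, e), s(d, e)} :
      Finset (Sym2 V)), ENNReal.ofReal (p x e.inf e.sup) = 1 * (ENNReal.ofReal (p x i b) *
        (ENNReal.ofReal (p x i c) * ENNReal.ofReal (p x b c))) *
        (ENNReal.ofReal (p x i d) * (ENNReal.ofReal (p x i e) * ENNReal.ofReal (p x d e))) := by
    intro x
    rw [Finset.prod_union, Finset.prod_insert, Finset.prod_insert, Finset.prod_insert,
      Finset.prod_insert, Finset.prod_singleton, Finset.prod_singleton]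
    · simp only [Sym2.inf_mk, Sym2.sup_mk, h.inf_sup, one_mul]
    all_goals simp [hib, hic, hbc, hid, hie, hde, hib.symm, hbc.symm, hid.symm, hie.symm,
      hde.symm, hbd.symm, hbe.symm, hcd.symm, hce.symm]
  simp only [hprod]
  have hm := h.measurable_ofReal
  refine (h.lintegral_mul_rooted_le
    (measurable_const.mul ((hm i b).mul ((hm i c).mul (hm b c)))) hid hie hde
    (fun x y => ?_) (fun x y => ?_)).trans ?_
  · simp only [Pi.mul_apply]
    rw [h.update_of_ne hid hbd, h.update_of_ne hid hcd, h.update_of_ne hbd hcd]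
  · simp only [Pi.mul_apply]
    rw [h.update_of_ne hie hbe, h.update_of_ne hie hce, h.update_of_ne hbe hce]
  rw [ENNReal.ofReal_mul (h.rootedBound_nonneg _ _ _)]
  gcongr
  simpa using h.lintegral_mul_rooted_le (f := fun _ => 1) measurable_const hib hic hbc
    (fun _ _ => rfl) fun _ _ => rfl

lemma law_inter_eq_mul (h : PositionKernel ν B q p) {s t : Finset (Sym2 V)} (hst : Disjoint s t)
    {S T : Finset V} (hST : Disjoint S T) (hS : ∀ e ∈ s, ∀ i ∈ e, B i → i ∈ S)
    (hT : ∀ e ∈ t, ∀ i ∈ e, B i → i ∈ T) :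
    law V ν (edgesPresent p (s ∪ t)) =
      law V ν (edgesPresent p s) * law V ν (edgesPresent p t) := by
  simp only [h.law_edgesPresent]
  simp only [Finset.prod_union hst]
  exact lintegral_mul_eq_of_dependsOn ν
    (Finset.measurable_prod _ fun e _ => h.measurable_ofReal _ _)
    (Finset.measurable_prod _ fun e _ => h.measurable_ofReal _ _) hST (h.dependsOn_prod hS)
    (h.dependsOn_prod hT)

end PositionKernel

/-- The event that `T` enumerates the vertices of a triangle. -/
def triangleEvent {V E : Type*} [LinearOrder V] (p : (V → E) → V → V → ℝ) (T : Fin 3 → V) :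
    Set ((V → E) × (V → V → ℝ)) :=
  {ω | ∀ i j : Fin 3, i ≠ j → T i ≠ T j ∧ ω.2 (T i ⊓ T j) (T i ⊔ T j) ≤ p ω.1 (T i) (T j)}

/-- The weight of a triangle. -/
def triWeight {V : Type*} (w : V → ℝ) (T : Fin 3 → V) : ℝ := ∏ i, (w (T i))⁻¹

/-- The weighted number of triangles. -/
def triangleStat {V E : Type*} [LinearOrder V] [Fintype V] (p : (V → E) → V → V → ℝ) (w : V → ℝ)
    (ω : (V → E) × (V → V → ℝ)) : ℝ :=
  ∑ T : Fin 3 → V, (triangleEvent p T).indicator (fun _ => triWeight w T) ω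

/-- The second moment of the contributions of two triples to the weighted number of triangles. -/
def pairMoment {V E : Type*} [LinearOrder V] [Fintype V] [MeasurableSpace E] (ν : Measure E)
    (p : (V → E) → V → V → ℝ) (w : V → ℝ) (T T' : Fin 3 → V) : ℝ :=
  triWeight w T * triWeight w T' *
    (PositionKernel.law V ν).real (triangleEvent p T ∩ triangleEvent p T')

/-- The contribution of the pairs of triples which have two common vertices in their first two
places, or a single common vertex, in the community, in their first places. -/
def overlapMoment {V E : Type*} [LinearOrder V] [Fintype V] [MeasurableSpace E] (ν : Measure E)
    (B : V → Prop) (p : (V → E) → V → V → ℝ) (w : V → ℝ) (T T' : Fin 3 → V) : ℝ :=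
  (if T 0 = T' 0 ∧ T 1 = T' 1 then pairMoment ν p w T T' else 0) +
    if T 0 = T' 0 ∧ B (T 0) ∧ T 1 ≠ T' 1 ∧ T 1 ≠ T' 2 ∧ T 2 ≠ T' 1 ∧ T 2 ≠ T' 2 then
      pairMoment ν p w T T' else 0

lemma triWeight_comp_perm {V : Type*} (w : V → ℝ) (T : Fin 3 → V) (π : Equiv.Perm (Fin 3)) :
    triWeight w (T ∘ π) = triWeight w T :=
  Equiv.prod_comp π fun i => (w (T i))⁻¹

lemma triWeight_nonneg {V : Type*} {w : V → ℝ} (hw : ∀ i, 0 ≤ w i) (T : Fin 3 → V) :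
    0 ≤ triWeight w T :=
  Finset.prod_nonneg fun _ _ => inv_nonneg.2 (hw _)

lemma sum_fin_three {V M : Type*} [Fintype V] [AddCommMonoid M] (f : (Fin 3 → V) → M) :
    ∑ T, f T = ∑ a, ∑ b, ∑ c, f ![a, b, c] := by
  let e : V × V × V ≃ (Fin 3 → V) :=
    { toFun := fun t => ![t.1, t.2.1, t.2.2]
      invFun := fun T => (T 0, T 1, T 2)
      left_inv := fun t => rfl
      right_inv := fun T => by ext i; fin_cases i <;> rfl }
  rw [← Equiv.sum_comp e, Fintype.sum_prod_type]
  simp only [Fintype.sum_prod_type]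
  rfl

lemma exists_perm_fin_three : ∀ i i' : Fin 3, i ≠ i' →
    ∃ π : Equiv.Perm (Fin 3), π 0 = i ∧ π 1 = i' := by
  decide

section Triangles

variable {V E : Type*} [LinearOrder V]

lemma triangleEvent_comp_perm (p : (V → E) → V → V → ℝ) (T : Fin 3 → V) (π : Equiv.Perm (Fin 3)) :
    triangleEvent p (T ∘ π) = triangleEvent p T := by
  ext ω
  constructor
  · intro h i j hij
    have := h (π.symm i) (π.symm j) (by simpa using hij)
    simpa using this
  · intro h i j hij
    exact h (π i) (π j) (by simpa using hij)

lemma triangleEvent_eq_empty (p : (V → E) → V → V → ℝ) {T : Fin 3 → V}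
    (hT : ¬Function.Injective T) : triangleEvent p T = ∅ := by
  simp only [Function.Injective, not_forall] at hT
  obtain ⟨i, j, hij, hne⟩ := hT
  ext ω
  simp only [Set.mem_empty_iff_false, iff_false]
  exact fun h => (h i j hne).1 hij

lemma edgesPresent_union (p : (V → E) → V → V → ℝ) (s t : Finset (Sym2 V)) :
    edgesPresent p (s ∪ t) = edgesPresent p s ∩ edgesPresent p t := by
  ext ω
  simp only [edgesPresent, mem_union, Set.mem_inter_iff, Set.mem_ofPred_eq]
  exact ⟨fun h => ⟨fun e he => h e (Or.inl he), fun e he => h e (Or.inr he)⟩,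
    fun h e he => he.elim (h.1 e) (h.2 e)⟩

end Triangles

namespace PositionKernel

variable {V E : Type*} [LinearOrder V] [MeasurableSpace E] {ν : Measure E}
  {B : V → Prop} {q : V → V → ℝ} {p : (V → E) → V → V → ℝ} {w : V → ℝ}

lemma triangleEvent_eq (h : PositionKernel ν B q p) {T : Fin 3 → V} (hT : Function.Injective T) :
    triangleEvent p T = edgesPresent p (triEdges T) := by
  have h01 : T 0 ≠ T 1 := hT.ne (by decide)
  have h02 : T 0 ≠ T 2 := hT.ne (by decide)
  have h12 : T 1 ≠ T 2 := hT.ne (by decide)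
  ext ω
  simp only [triangleEvent, edgesPresent, triEdges, Set.mem_ofPred_eq, mem_insert,
    mem_singleton, forall_eq_or_imp, forall_eq, Sym2.inf_mk, Sym2.sup_mk, h.inf_sup]
  constructor
  · intro hω
    exact ⟨(hω 0 1 (by decide)).2, (hω 0 2 (by decide)).2, (hω 1 2 (by decide)).2⟩
  · rintro ⟨h1, h2, h3⟩ i j hij
    refine ⟨hT.ne hij, ?_⟩
    have key : ∀ a b, ω.2 (a ⊓ b) (a ⊔ b) ≤ p ω.1 a b → ω.2 (b ⊓ a) (b ⊔ a) ≤ p ω.1 b a := by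
      intro a b hab
      rwa [inf_comm, sup_comm, h.symm]
    fin_cases i <;> fin_cases j <;>
      first
      | exact absurd rfl hij
      | exact h1
      | exact h2
      | exact h3
      | exact key _ _ h1
      | exact key _ _ h2
      | exact key _ _ h3

lemma measurableSet_triangleEvent (h : PositionKernel ν B q p) (T : Fin 3 → V) :
    MeasurableSet (triangleEvent p T) := by
  by_cases hT : Function.Injective T
  · rw [h.triangleEvent_eq hT]
    exact measurableSet_edgesPresent h.measurable _
  · rw [triangleEvent_eq_empty p hT]
    exact MeasurableSet.empty

variable [Fintype V]

lemma pairMoment_nonneg (hw : ∀ i, 0 ≤ w i) (T T' : Fin 3 → V) : 0 ≤ pairMoment ν p w T T' :=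
  mul_nonneg (mul_nonneg (triWeight_nonneg hw T) (triWeight_nonneg hw T')) measureReal_nonneg

lemma overlapMoment_nonneg (hw : ∀ i, 0 ≤ w i) (T T' : Fin 3 → V) :
    0 ≤ overlapMoment ν B p w T T' := by
  have := pairMoment_nonneg (ν := ν) (p := p) hw T T'
  unfold overlapMoment
  split_ifs <;> positivity

lemma pairMoment_comp_perm (T T' : Fin 3 → V) (π ρ : Equiv.Perm (Fin 3)) :
    pairMoment ν p w (T ∘ π) (T' ∘ ρ) = pairMoment ν p w T T' := by
  simp only [pairMoment, triangleEvent_comp_perm, triWeight_comp_perm]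

lemma overlapMoment_le_sum (hw : ∀ i, 0 ≤ w i) (T T' : Fin 3 → V) (π ρ : Equiv.Perm (Fin 3)) :
    overlapMoment ν B p w (T ∘ π) (T' ∘ ρ) ≤ ∑ π : Equiv.Perm (Fin 3), ∑ ρ : Equiv.Perm (Fin 3),
      overlapMoment ν B p w (T ∘ π) (T' ∘ ρ) :=
  (Finset.single_le_sum (f := fun ρ : Equiv.Perm (Fin 3) => overlapMoment ν B p w (T ∘ π) (T' ∘ ρ))
    (fun _ _ => overlapMoment_nonneg hw _ _) (mem_univ ρ)).trans
  (Finset.single_le_sum (f := fun π : Equiv.Perm (Fin 3) => ∑ ρ : Equiv.Perm (Fin 3),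
    overlapMoment ν B p w (T ∘ π) (T' ∘ ρ))
    (fun _ _ => Finset.sum_nonneg fun _ _ => overlapMoment_nonneg hw _ _) (mem_univ π))

variable [IsProbabilityMeasure ν]

lemma cov_triangle_le (h : PositionKernel ν B q p) (hw : ∀ i, 0 ≤ w i) (T T' : Fin 3 → V) :
    pairMoment ν p w T T' - triWeight w T * (law V ν).real (triangleEvent p T) *
        (triWeight w T' * (law V ν).real (triangleEvent p T')) ≤
      ∑ π : Equiv.Perm (Fin 3), ∑ ρ : Equiv.Perm (Fin 3),
        overlapMoment ν B p w (T ∘ π) (T' ∘ ρ) := by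
  have hnn : 0 ≤ triWeight w T * (law V ν).real (triangleEvent p T) *
      (triWeight w T' * (law V ν).real (triangleEvent p T')) :=
    mul_nonneg (mul_nonneg (triWeight_nonneg hw T) measureReal_nonneg)
      (mul_nonneg (triWeight_nonneg hw T') measureReal_nonneg)
  have hsum : 0 ≤ ∑ π : Equiv.Perm (Fin 3), ∑ ρ : Equiv.Perm (Fin 3),
        overlapMoment ν B p w (T ∘ π) (T' ∘ ρ) :=
    Finset.sum_nonneg fun _ _ => Finset.sum_nonneg fun _ _ => overlapMoment_nonneg hw _ _
  by_cases hT : Function.Injective T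
  swap
  · have : pairMoment ν p w T T' = 0 := by simp [pairMoment, triangleEvent_eq_empty p hT]
    linarith
  by_cases hT' : Function.Injective T'
  swap
  · have : pairMoment ν p w T T' = 0 := by simp [pairMoment, triangleEvent_eq_empty p hT']
    linarith
  by_cases h2 : ∃ i i' j j', i ≠ i' ∧ j ≠ j' ∧ T i = T' j ∧ T i' = T' j'
  · obtain ⟨i, i', j, j', hi, hj, h1, h2⟩ := h2
    obtain ⟨π, hπ0, hπ1⟩ := exists_perm_fin_three i i' hi
    obtain ⟨ρ, hρ0, hρ1⟩ := exists_perm_fin_three j j' hj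
    have hle := overlapMoment_le_sum (ν := ν) (B := B) (p := p) hw T T' π ρ
    have hpm := pairMoment_nonneg (ν := ν) (p := p) hw T T'
    have : pairMoment ν p w T T' ≤ overlapMoment ν B p w (T ∘ π) (T' ∘ ρ) := by
      rw [overlapMoment, if_pos (by simp [hπ0, hπ1, hρ0, hρ1, h1, h2]), pairMoment_comp_perm]
      split_ifs <;> linarith
    linarith
  push Not at h2
  by_cases h1 : ∃ i j, T i = T' j ∧ B (T i)
  · obtain ⟨i, j, h1, hB⟩ := h1
    set π := Equiv.swap 0 i with hπ
    set ρ := Equiv.swap 0 j with hρ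
    have hπ0 : π 0 = i := Equiv.swap_apply_left _ _
    have hρ0 : ρ 0 = j := Equiv.swap_apply_left _ _
    have hne : ∀ a b : Fin 3, a ≠ 0 → b ≠ 0 → T (π a) ≠ T' (ρ b) := fun a b ha hb =>
      h2 i (π a) j (ρ b) (hπ0 ▸ π.injective.ne ha.symm) (hρ0 ▸ ρ.injective.ne hb.symm) h1
    have hle := overlapMoment_le_sum (ν := ν) (B := B) (p := p) hw T T' π ρ
    have hpm := pairMoment_nonneg (ν := ν) (p := p) hw T T'
    have : pairMoment ν p w T T' ≤ overlapMoment ν B p w (T ∘ π) (T' ∘ ρ) := by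
      rw [overlapMoment, pairMoment_comp_perm]
      rw [if_pos (c := _ ∧ B _ ∧ _)]
      · split_ifs <;> linarith
      · simp only [Function.comp_apply, hπ0, hρ0]
        exact ⟨h1, hB, hne 1 1 (by decide) (by decide), hne 1 2 (by decide) (by decide),
          hne 2 1 (by decide) (by decide), hne 2 2 (by decide) (by decide)⟩
    linarith
  push Not at h1
  have hmem : ∀ (S : Fin 3 → V), ∀ e ∈ triEdges S, ∃ i j : Fin 3, i ≠ j ∧ e = s(S i, S j) := by
    intro S e he
    simp only [triEdges, mem_insert, mem_singleton] at he
    rcases he with rfl | rfl | rfl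
    exacts [⟨0, 1, by decide, rfl⟩, ⟨0, 2, by decide, rfl⟩, ⟨1, 2, by decide, rfl⟩]
  have hS : ∀ (S : Fin 3 → V), ∀ e ∈ triEdges S, ∀ v ∈ e, B v → v ∈ (univ.image S).filter B := by
    intro S e he v hv hB
    obtain ⟨i, j, -, rfl⟩ := hmem S e he
    rw [mem_filter]
    refine ⟨?_, hB⟩
    rcases Sym2.mem_iff.1 hv with rfl | rfl <;> simp
  have hdisj : Disjoint (triEdges T) (triEdges T') := by
    rw [Finset.disjoint_left]
    intro e he he'
    obtain ⟨i, i', hi, rfl⟩ := hmem T e he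
    obtain ⟨j, j', hj, hij⟩ := hmem T' _ he'
    rcases Sym2.eq_iff.1 hij with ⟨h3, h4⟩ | ⟨h3, h4⟩
    · exact h2 i i' j j' hi hj h3 h4
    · exact h2 i i' j' j hi hj.symm h3 h4
  have hdisjB : Disjoint ((univ.image T).filter B) ((univ.image T').filter B) := by
    rw [Finset.disjoint_left]
    intro v hv hv'
    simp only [mem_filter, mem_image, mem_univ, true_and] at hv hv'
    obtain ⟨⟨i, rfl⟩, hB⟩ := hv
    obtain ⟨⟨j, hj⟩, -⟩ := hv'
    exact h1 i j hj.symm hB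
  have hind := h.law_inter_eq_mul hdisj hdisjB (hS T) (hS T')
  rw [edgesPresent_union, ← h.triangleEvent_eq hT, ← h.triangleEvent_eq hT'] at hind
  have hind' : (law V ν).real (triangleEvent p T ∩ triangleEvent p T') =
      (law V ν).real (triangleEvent p T) * (law V ν).real (triangleEvent p T') := by
    simp only [Measure.real, hind, ENNReal.toReal_mul]
  rw [pairMoment, hind']
  linarith

lemma variance_triangleStat_le (h : PositionKernel ν B q p) (hw : ∀ i, 0 ≤ w i) :
    variance (triangleStat p w) (law V ν) ≤
      36 * ∑ T : Fin 3 → V, ∑ T' : Fin 3 → V, overlapMoment ν B p w T T' := by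
  have hms := h.measurableSet_triangleEvent
  have hmem : ∀ T, MemLp ((triangleEvent p T).indicator fun _ => triWeight w T) 2 (law V ν) :=
    fun T => memLp_indicator_const 2 (hms T) _ (Or.inr (measure_ne_top _ _))
  have hInt : ∀ T, Integrable ((triangleEvent p T).indicator fun _ => triWeight w T) (law V ν) :=
    fun T => (hmem T).integrable (by norm_num)
  have hmemW : MemLp (triangleStat p w) 2 (law V ν) :=
    memLp_finsetSum (f := fun T => (triangleEvent p T).indicator fun _ => triWeight w T) _
      fun T _ => hmem T
  have hmean : ∫ ω, triangleStat p w ω ∂law V ν =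
      ∑ T : Fin 3 → V, triWeight w T * (law V ν).real (triangleEvent p T) := by
    unfold triangleStat
    rw [integral_finsetSum _ fun T _ => hInt T]
    refine Finset.sum_congr rfl fun T _ => ?_
    rw [integral_indicator_const _ (hms T), smul_eq_mul, mul_comm]
  have hsq : ∫ ω, (triangleStat p w ^ 2) ω ∂law V ν =
      ∑ T : Fin 3 → V, ∑ T' : Fin 3 → V, pairMoment ν p w T T' := by
    have hpt : ∀ ω, (triangleStat p w ^ 2) ω = ∑ T : Fin 3 → V, ∑ T' : Fin 3 → V,
        (triangleEvent p T ∩ triangleEvent p T').indicator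
          (fun _ => triWeight w T * triWeight w T') ω := by
      intro ω
      rw [Pi.pow_apply, triangleStat, sq, Finset.sum_mul_sum]
      refine Finset.sum_congr rfl fun T _ => Finset.sum_congr rfl fun T' _ => ?_
      rw [Set.inter_indicator_mul (fun _ => triWeight w T) (fun _ => triWeight w T')]
    have hint2 : ∀ T T', Integrable ((triangleEvent p T ∩ triangleEvent p T').indicator
        fun _ => triWeight w T * triWeight w T') (law V ν) := fun T T' =>
      (integrable_const _).indicator ((hms T).inter (hms T'))
    simp only [hpt]
    rw [integral_finsetSum _ fun T _ => integrable_finsetSum _ fun T' _ => hint2 T T']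
    refine Finset.sum_congr rfl fun T _ => ?_
    rw [integral_finsetSum _ fun T' _ => hint2 T T']
    refine Finset.sum_congr rfl fun T' _ => ?_
    rw [integral_indicator_const _ ((hms T).inter (hms T')), smul_eq_mul, mul_comm, pairMoment]
  rw [variance_eq_sub hmemW, hsq, hmean, sq, Finset.sum_mul_sum, ← Finset.sum_sub_distrib]
  calc _ ≤ ∑ T : Fin 3 → V, ∑ T' : Fin 3 → V, ∑ π : Equiv.Perm (Fin 3),
        ∑ ρ : Equiv.Perm (Fin 3), overlapMoment ν B p w (T ∘ π) (T' ∘ ρ) := by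
        refine Finset.sum_le_sum fun T _ => ?_
        rw [← Finset.sum_sub_distrib]
        exact Finset.sum_le_sum fun T' _ => h.cov_triangle_le hw T T'
    _ = ∑ π : Equiv.Perm (Fin 3), ∑ ρ : Equiv.Perm (Fin 3), ∑ T : Fin 3 → V, ∑ T' : Fin 3 → V,
          overlapMoment ν B p w (T ∘ π) (T' ∘ ρ) := by
        simp only [Finset.sum_comm (s := (univ : Finset (Fin 3 → V)))
          (t := (univ : Finset (Equiv.Perm (Fin 3))))]
    _ = ∑ _π : Equiv.Perm (Fin 3), ∑ _ρ : Equiv.Perm (Fin 3), ∑ T : Fin 3 → V, ∑ T' : Fin 3 → V,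
          overlapMoment ν B p w T T' := by
        refine Finset.sum_congr rfl fun π _ => Finset.sum_congr rfl fun ρ _ => ?_
        refine (Equiv.sum_comp (Equiv.arrowCongr π.symm (Equiv.refl V))
          fun T => ∑ T' : Fin 3 → V, overlapMoment ν B p w T (T' ∘ ρ)).trans ?_
        refine Finset.sum_congr rfl fun T _ => ?_
        exact Equiv.sum_comp (Equiv.arrowCongr ρ.symm (Equiv.refl V))
          fun T' => overlapMoment ν B p w T T'
    _ = _ := by
        simp only [Finset.sum_const, card_univ, Fintype.card_perm, Fintype.card_fin, nsmul_eq_mul]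
        norm_num [Nat.factorial]
        ring

end PositionKernel

lemma triEdges_cons {V : Type*} (a b c : V) :
    triEdges ![a, b, c] = {s(a, b), s(a, c), s(b, c)} := rfl

lemma triWeight_cons {V : Type*} (w : V → ℝ) (a b c : V) :
    triWeight w ![a, b, c] = (w a)⁻¹ * (w b)⁻¹ * (w c)⁻¹ := by
  rw [triWeight, Fin.prod_univ_three]
  rfl

namespace PositionKernel

variable {V E : Type*} [LinearOrder V] [Fintype V] [MeasurableSpace E] {ν : Measure E}
  {B : V → Prop} {q : V → V → ℝ} {p : (V → E) → V → V → ℝ} {w : V → ℝ}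

lemma pairMoment_eq_zero {T T' : Fin 3 → V}
    (h : ¬(Function.Injective T ∧ Function.Injective T')) : pairMoment ν p w T T' = 0 := by
  rcases not_and_or.1 h with h | h <;> simp [pairMoment, triangleEvent_eq_empty p h]

variable [IsProbabilityMeasure ν]

lemma pairMoment_le_of_edge (h : PositionKernel ν B q p) (hw : ∀ i, 0 ≤ w i) (a b c c' : V) :
    pairMoment ν p w ![a, b, c] ![a, b, c'] ≤ ((w a)⁻¹ * (w b)⁻¹) ^ 2 * q a b *
      ((if c = c' then wedgeBound B q a b c * (w c)⁻¹ ^ 2 else 0) +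
        wedgeBound B q a b c * (w c)⁻¹ * (wedgeBound B q a b c' * (w c')⁻¹)) := by
  have hwi : ∀ i, 0 ≤ (w i)⁻¹ := fun i => inv_nonneg.2 (hw i)
  have hq := h.q_nonneg a b
  have hW := h.wedgeBound_nonneg a b
  have hwa := hwi a
  have hwb := hwi b
  have hwc := hwi c
  have hwc' := hwi c'
  have hWc := hW c
  have hWc' := hW c'
  by_cases hT : Function.Injective ![a, b, c] ∧ Function.Injective ![a, b, c']
  swap
  · rw [pairMoment_eq_zero hT]
    split_ifs <;> positivity
  have hab : a ≠ b := hT.1.ne (a₁ := 0) (a₂ := 1) (by decide)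
  have hac : a ≠ c := hT.1.ne (a₁ := 0) (a₂ := 2) (by decide)
  have hbc : b ≠ c := hT.1.ne (a₁ := 1) (a₂ := 2) (by decide)
  have hac' : a ≠ c' := hT.2.ne (a₁ := 0) (a₂ := 2) (by decide)
  have hbc' : b ≠ c' := hT.2.ne (a₁ := 1) (a₂ := 2) (by decide)
  rw [pairMoment, h.triangleEvent_eq hT.1, h.triangleEvent_eq hT.2, ← edgesPresent_union]
  simp only [triWeight_cons, triEdges_cons]
  by_cases hcc : c = c'
  · subst hcc
    have hle : (law V ν).real
        (edgesPresent p ({s(a, b), s(a, c), s(b, c)} ∪ {s(a, b), s(a, c), s(b, c)})) ≤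
        q a b * wedgeBound B q a b c := by
      rw [Finset.union_self]
      exact ENNReal.toReal_le_of_le_ofReal (mul_nonneg hq hWc) (h.law_triangle_le hab hac hbc)
    rw [if_pos rfl]
    calc _ ≤ (w a)⁻¹ * (w b)⁻¹ * (w c)⁻¹ * ((w a)⁻¹ * (w b)⁻¹ * (w c)⁻¹) *
          (q a b * wedgeBound B q a b c) := by
          refine mul_le_mul_of_nonneg_left ?_ (by positivity)
          exact le_trans (le_of_eq (by congr!)) hle
      _ = ((w a)⁻¹ * (w b)⁻¹) ^ 2 * q a b * (wedgeBound B q a b c * (w c)⁻¹ ^ 2 + 0) := by ring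
      _ ≤ _ := by gcongr; positivity
  · have hset : ({s(a, b), s(a, c), s(b, c)} ∪ {s(a, b), s(a, c'), s(b, c')} : Finset (Sym2 V)) =
        {s(a, b), s(a, c), s(b, c), s(a, c'), s(b, c')} := by
      ext e
      simp only [mem_union, mem_insert, mem_singleton]
      tauto
    have hle : (law V ν).real
        (edgesPresent p ({s(a, b), s(a, c), s(b, c)} ∪ {s(a, b), s(a, c'), s(b, c')})) ≤
        q a b * wedgeBound B q a b c * wedgeBound B q a b c' := by
      rw [hset]
      exact ENNReal.toReal_le_of_le_ofReal (by positivity)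
        (h.law_diamond_le hab hac hbc hac' hbc' hcc)
    rw [if_neg hcc]
    calc _ ≤ (w a)⁻¹ * (w b)⁻¹ * (w c)⁻¹ * ((w a)⁻¹ * (w b)⁻¹ * (w c')⁻¹) *
          (q a b * wedgeBound B q a b c * wedgeBound B q a b c') := by
          refine mul_le_mul_of_nonneg_left ?_ (by positivity)
          exact le_trans (le_of_eq (by congr!)) hle
      _ = _ := by ring

lemma pairMoment_le_of_vertex (h : PositionKernel ν B q p) (hw : ∀ i, 0 ≤ w i) {i b c b' c' : V}
    (hbb : b ≠ b') (hbc : b ≠ c') (hcb : c ≠ b') (hcc : c ≠ c') :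
    pairMoment ν p w ![i, b, c] ![i, b', c'] ≤
      (w i)⁻¹ * (rootedBound q i b c * ((w b)⁻¹ * (w c)⁻¹)) *
        ((w i)⁻¹ * (rootedBound q i b' c' * ((w b')⁻¹ * (w c')⁻¹))) := by
  have hwi : ∀ i, 0 ≤ (w i)⁻¹ := fun i => inv_nonneg.2 (hw i)
  have hR := h.rootedBound_nonneg i b c
  have hR' := h.rootedBound_nonneg i b' c'
  have h1 := hwi i
  have h2 := hwi b
  have h3 := hwi c
  have h4 := hwi b'
  have h5 := hwi c'
  by_cases hT : Function.Injective ![i, b, c] ∧ Function.Injective ![i, b', c']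
  swap
  · rw [pairMoment_eq_zero hT]
    positivity
  have hle : (law V ν).real
      (edgesPresent p ({s(i, b), s(i, c), s(b, c)} ∪ {s(i, b'), s(i, c'), s(b', c')})) ≤
      rootedBound q i b c * rootedBound q i b' c' :=
    ENNReal.toReal_le_of_le_ofReal (by positivity)
      (h.law_bowtie_le (hT.1.ne (a₁ := 0) (a₂ := 1) (by decide))
        (hT.1.ne (a₁ := 0) (a₂ := 2) (by decide)) (hT.1.ne (a₁ := 1) (a₂ := 2) (by decide))
        (hT.2.ne (a₁ := 0) (a₂ := 1) (by decide)) (hT.2.ne (a₁ := 0) (a₂ := 2) (by decide))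
        (hT.2.ne (a₁ := 1) (a₂ := 2) (by decide)) hbb hbc hcb hcc)
  rw [pairMoment, h.triangleEvent_eq hT.1, h.triangleEvent_eq hT.2, ← edgesPresent_union]
  simp only [triWeight_cons, triEdges_cons]
  calc _ ≤ (w i)⁻¹ * (w b)⁻¹ * (w c)⁻¹ * ((w i)⁻¹ * (w b')⁻¹ * (w c')⁻¹) *
        (rootedBound q i b c * rootedBound q i b' c') := by
          refine mul_le_mul_of_nonneg_left ?_ (by positivity)
          exact le_trans (le_of_eq (by congr!)) hle
    _ = _ := by ring

lemma overlapMoment_le (h : PositionKernel ν B q p) (hw : ∀ i, 0 ≤ w i) (a b c a' b' c' : V) :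
    overlapMoment ν B p w ![a, b, c] ![a', b', c'] ≤
      (if a = a' then if b = b' then ((w a)⁻¹ * (w b)⁻¹) ^ 2 * q a b *
        ((if c = c' then wedgeBound B q a b c * (w c)⁻¹ ^ 2 else 0) +
        wedgeBound B q a b c * (w c)⁻¹ * (wedgeBound B q a b c' * (w c')⁻¹)) else 0 else 0) +
      if a = a' then (if B a then (w a)⁻¹ * (rootedBound q a b c * ((w b)⁻¹ * (w c)⁻¹)) *
        ((w a)⁻¹ * (rootedBound q a b' c' * ((w b')⁻¹ * (w c')⁻¹))) else 0) else 0 := by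
  unfold overlapMoment
  simp only [Matrix.cons_val]
  by_cases haa : a = a'
  swap
  · simp [haa]
  subst haa
  simp only [true_and, if_true]
  refine add_le_add ?_ ?_
  · by_cases hb : b = b'
    · subst hb
      rw [if_pos rfl, if_pos rfl]
      exact h.pairMoment_le_of_edge hw a b c c'
    · rw [if_neg hb, if_neg hb]
  · by_cases hB : B a
    swap
    · simp [hB]
    have hwi : ∀ i, 0 ≤ (w i)⁻¹ := fun i => inv_nonneg.2 (hw i)
    have hR := h.rootedBound_nonneg a b c
    have hR' := h.rootedBound_nonneg a b' c'
    have h1 := hwi a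
    have h2 := hwi b
    have h3 := hwi c
    have h4 := hwi b'
    have h5 := hwi c'
    rw [if_pos hB]
    split_ifs with hne
    · exact h.pairMoment_le_of_vertex hw hne.2.1 hne.2.2.1 hne.2.2.2.1 hne.2.2.2.2
    · positivity

lemma sum_overlapMoment_le (h : PositionKernel ν B q p) (hw : ∀ i, 0 ≤ w i) :
    ∑ T : Fin 3 → V, ∑ T' : Fin 3 → V, overlapMoment ν B p w T T' ≤
      ∑ a, ∑ b, ((w a)⁻¹ * (w b)⁻¹) ^ 2 * q a b *
        (∑ c, wedgeBound B q a b c * (w c)⁻¹ ^ 2 + (∑ c, wedgeBound B q a b c * (w c)⁻¹) ^ 2) +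
      ∑ i with B i, ((w i)⁻¹ * ∑ b, ∑ c, rootedBound q i b c * ((w b)⁻¹ * (w c)⁻¹)) ^ 2 := by
  simp only [sum_fin_three]
  refine (Finset.sum_le_sum fun a _ => Finset.sum_le_sum fun b _ => Finset.sum_le_sum fun c _ =>
    Finset.sum_le_sum fun a' _ => Finset.sum_le_sum fun b' _ => Finset.sum_le_sum fun c' _ =>
      h.overlapMoment_le hw a b c a' b' c').trans (le_of_eq ?_)
  simp only [Finset.sum_add_distrib]
  have hpull : ∀ (P : Prop) [Decidable P] (f : V → ℝ),
      (∑ x, if P then f x else 0) = if P then ∑ x, f x else 0 := fun P _ f => by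
    split_ifs <;> simp
  simp only [hpull, Finset.sum_ite_eq, mem_univ, if_true]
  refine congrArg₂ (· + ·) ?_ ?_
  · refine Finset.sum_congr rfl fun a _ => Finset.sum_congr rfl fun b _ => ?_
    simp only [← Finset.mul_sum, Finset.sum_add_distrib, Finset.sum_ite_eq, mem_univ, if_true]
    rw [sq (∑ c, _), Finset.sum_mul]
  · rw [Finset.sum_filter]
    refine Finset.sum_congr rfl fun a _ => ?_
    split_ifs
    · simp only [Finset.mul_sum, sq, Finset.sum_mul]
      exact Finset.sum_congr rfl fun b _ => Finset.sum_congr rfl fun c _ =>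
        Finset.sum_congr rfl fun b' _ => Finset.sum_congr rfl fun c' _ => mul_comm _ _
    · rfl

end PositionKernel

/-- A community `B` of size at most `k` among at most `n` vertices, with weights which are
controlled on both scales. -/
structure CommunityWeights {V : Type*} [Fintype V] (B : V → Prop) (w : V → ℝ) (k n w0 M : ℝ) :
    Prop where
  one_le : 1 ≤ k
  le : k ≤ n
  card_le : (Fintype.card V : ℝ) ≤ n
  card_community_le : (#{i | B i} : ℝ) ≤ k
  pos : 0 < w0
  le_weight : ∀ i, w0 ≤ w i
  hubBound : HubBound univ w n M
  hubBound_community : HubBound (univ.filter B) w k M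

/-- Truncated rank one edge probabilities, at scale `k` inside the community `B` and at scale `n`
outside of it. -/
def rankOneBound {V : Type*} (B : V → Prop) (w : V → ℝ) (k n K : ℝ) (i j : V) : ℝ :=
  min (K * (w i * w j) / if B i ∧ B j then k else n) 1

lemma rankOneBound_le_of_mem {V : Type*} {B : V → Prop} {w : V → ℝ} {k n K : ℝ} {i j : V}
    (hi : B i) (hj : B j) :
    rankOneBound B w k n K i j ≤ K * (w i * w j) / k := by
  rw [rankOneBound, if_pos ⟨hi, hj⟩]
  exact min_le_left _ _

lemma rankOneBound_le_of_not {V : Type*} {B : V → Prop} {w : V → ℝ} {k n K : ℝ} {i j : V}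
    (hij : ¬(B i ∧ B j)) :
    rankOneBound B w k n K i j ≤ K * (w i * w j) / n := by
  rw [rankOneBound, if_neg hij]
  exact min_le_left _ _

lemma rankOneBound_le_one {V : Type*} {B : V → Prop} {w : V → ℝ} {k n K : ℝ} (i j : V) :
    rankOneBound B w k n K i j ≤ 1 := min_le_right _ _

lemma sum_sum_mul_div_le {V : Type*} [Fintype V] (f g : V → ℝ) (r F G D : ℝ) (hr : 0 < r)
    (hf : ∀ v, 0 ≤ f v) (hg : ∀ v, 0 ≤ g v) (hF : ∑ v, f v ≤ F) (hG : ∑ v, g v ≤ G)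
    (hD : F * G ≤ D * r) : ∑ b, ∑ c, f b * g c / r ≤ D := by
  simp only [← Finset.sum_div]
  rw [div_le_iff₀ hr, ← Finset.sum_mul_sum]
  refine le_trans ?_ hD
  have hf' := Finset.sum_nonneg fun v (_ : v ∈ univ) => hf v
  have hg' := Finset.sum_nonneg fun v (_ : v ∈ univ) => hg v
  exact mul_le_mul hF hG hg' (hf'.trans hF)

lemma two_edges_weight_le {x y z P Q K N N' : ℝ} (hx : 0 < x) (hy : 0 < y) (hz : 0 < z)
    (hN' : 0 < N') (hP0 : 0 ≤ P) (hQ0 : 0 ≤ Q) (hP : P ≤ K * (y * z) / N)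
    (hQ : Q ≤ K * (x * y) / N') :
    x⁻¹ * (P * Q * (y⁻¹ * z⁻¹)) ≤ K ^ 2 * (y / (N * N')) := by
  calc _ ≤ x⁻¹ * (K * (y * z) / N * (K * (x * y) / N') * (y⁻¹ * z⁻¹)) := by
        have := hP0.trans hP
        gcongr
    _ = _ := by field_simp

lemma opposite_edge_weight_le {x y z P Q K N w0 : ℝ} (hw0 : 0 < w0) (hx : w0 ≤ x) (hy : 0 < y)
    (hz : 0 < z) (hP0 : 0 ≤ P) (hQ : Q ≤ 1) (hP : P ≤ K * (y * z) / N) :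
    x⁻¹ * (P * Q * (y⁻¹ * z⁻¹)) ≤ K * w0⁻¹ * (1 / N) := by
  have hx0 := hw0.trans_le hx
  have hKN : 0 ≤ K * (y * z) / N := hP0.trans hP
  calc _ ≤ x⁻¹ * (P * 1 * (y⁻¹ * z⁻¹)) := by gcongr
    _ ≤ x⁻¹ * (K * (y * z) / N * 1 * (y⁻¹ * z⁻¹)) := by gcongr
    _ ≤ w0⁻¹ * (K * (y * z) / N * 1 * (y⁻¹ * z⁻¹)) := by gcongr
    _ = _ := by field_simp

lemma adjacent_edge_weight_le {x y z r P Q K N : ℝ} (hx : 0 < x) (hy : 0 < y) (hr : 0 < r)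
    (hz : r ≤ z) (hQ0 : 0 ≤ Q) (hP : P ≤ 1) (hQ : Q ≤ K * (x * y) / N) :
    x⁻¹ * (P * Q * (y⁻¹ * z⁻¹)) ≤ K * (1 / (N * r)) := by
  have hz0 := hr.trans_le hz
  have hKN : 0 ≤ K * (x * y) / N := hQ0.trans hQ
  calc _ ≤ x⁻¹ * (1 * (K * (x * y) / N) * (y⁻¹ * z⁻¹)) := by gcongr
    _ ≤ x⁻¹ * (1 * (K * (x * y) / N) * (y⁻¹ * r⁻¹)) := by gcongr
    _ = _ := by field_simp

namespace CommunityWeights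

variable {V : Type*} [Fintype V] {B : V → Prop} {w : V → ℝ} {k n w0 M K : ℝ}

lemma weight_pos (h : CommunityWeights B w k n w0 M) (i : V) : 0 < w i :=
  h.pos.trans_le (h.le_weight i)

lemma k_pos (h : CommunityWeights B w k n w0 M) : 0 < k := by linarith [h.one_le]

lemma n_pos (h : CommunityWeights B w k n w0 M) : 0 < n := h.k_pos.trans_le h.le

lemma M_nonneg (h : CommunityWeights B w k n w0 M) : 0 ≤ M :=
  nonneg_of_mul_nonneg_left ((Nat.cast_nonneg _).trans h.hubBound.card_hub_le)
    (Real.sqrt_pos.2 h.n_pos)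

lemma rankOneBound_nonneg (h : CommunityWeights B w k n w0 M) (hK : 0 ≤ K) (i j : V) :
    0 ≤ rankOneBound B w k n K i j := by
  have h1 := h.k_pos
  have h2 := h.n_pos
  have h3 := h.weight_pos i
  have h4 := h.weight_pos j
  unfold rankOneBound
  split_ifs <;> positivity

lemma rankOneBound_le (h : CommunityWeights B w k n w0 M) (hK : 0 ≤ K) (i j : V) :
    rankOneBound B w k n K i j ≤ K * (w i * w j) / k := by
  by_cases hij : B i ∧ B j
  · exact rankOneBound_le_of_mem hij.1 hij.2
  · have h1 := h.k_pos
    have h3 := h.weight_pos i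
    have h4 := h.weight_pos j
    refine (rankOneBound_le_of_not hij).trans ?_
    have := h.le
    gcongr

lemma sum_indicator_le (h : CommunityWeights B w k n w0 M) :
    ∑ i, (if B i then (1 : ℝ) else 0) ≤ k := by
  rw [← Finset.sum_filter, Finset.sum_const, nsmul_one]
  exact h.card_community_le

lemma sum_one_le (h : CommunityWeights B w k n w0 M) : ∑ _i : V, (1 : ℝ) ≤ n := by
  rw [Finset.sum_const, nsmul_one]
  exact h.card_le

end CommunityWeights

lemma HubBound.sum_hub_le {V : Type*} [Fintype V] {B : V → Prop} {S : Finset V} {w : V → ℝ}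
    {N M : ℝ} (h : HubBound S w N M) (hS : ∀ i, i ∈ S ↔ B i) :
    ∑ i, (if B i ∧ √N < w i then (1 : ℝ) else 0) ≤ M * √N := by
  rw [← Finset.sum_filter, Finset.sum_const, nsmul_one]
  refine le_trans (le_of_eq ?_) h.card_hub_le
  congr 2
  ext i
  simp [hS]

lemma HubBound.sum_light_le {V : Type*} [Fintype V] {B : V → Prop} {S : Finset V} {w : V → ℝ}
    {N M : ℝ} (h : HubBound S w N M) (hS : ∀ i, i ∈ S ↔ B i) :
    ∑ i, (if B i ∧ w i ≤ √N then w i else 0) ≤ M * N := by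
  rw [← Finset.sum_filter]
  convert h.sum_le using 2
  ext i
  simp [hS]

namespace CommunityWeights

variable {V : Type*} [Fintype V] {B : V → Prop} {w : V → ℝ} {k n w0 M K : ℝ}

lemma rooted_weight_le (h : CommunityWeights B w k n w0 M) (hK : 0 ≤ K) {i : V} (hi : B i)
    (b c : V) :
    (w i)⁻¹ * (rootedBound (rankOneBound B w k n K) i b c * ((w b)⁻¹ * (w c)⁻¹)) ≤
      (K ^ 2 + K * w0⁻¹ + K) *
        (((if B b ∧ w b ≤ √k then w b else 0) * (if B c then 1 else 0) / (k * k) +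
          (if B b then 1 else 0) * (if B c ∧ w c ≤ √k then w c else 0) / (k * k) +
          (if B b ∧ √k < w b then 1 else 0) * (if B c ∧ √k < w c then 1 else 0) / k) +
        ((if True ∧ w b ≤ √n then w b else 0) * 1 / (n * n) +
          1 * (if True ∧ w c ≤ √n then w c else 0) / (n * n) +
          (if True ∧ √n < w b then 1 else 0) * (if True ∧ √n < w c then 1 else 0) / n) +
        (1 * (if B c ∧ w c ≤ √k then w c else 0) / (n * k) +
          1 * (if B c ∧ √k < w c then 1 else 0) / (n * √k)) +
        ((if B b ∧ w b ≤ √k then w b else 0) * 1 / (n * k) +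
          (if B b ∧ √k < w b then 1 else 0) * 1 / (n * √k))) := by
  have hk := h.k_pos
  have hn := h.n_pos
  have hsk := Real.sqrt_pos.2 hk
  have hsn := Real.sqrt_pos.2 hn
  have hw0 := h.pos
  have hwi := h.weight_pos i
  have hwb := h.weight_pos b
  have hwc := h.weight_pos c
  set q := rankOneBound B w k n K with hq
  have hbc0 : 0 ≤ q b c := h.rankOneBound_nonneg hK b c
  have hib0 : 0 ≤ q i b := h.rankOneBound_nonneg hK i b
  have hic0 : 0 ≤ q i c := h.rankOneBound_nonneg hK i c
  have hbc1 : q b c ≤ 1 := rankOneBound_le_one b c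
  have hib1 : q i b ≤ 1 := rankOneBound_le_one i b
  have hswap : ∀ x, (w i)⁻¹ * (q b c * x * ((w b)⁻¹ * (w c)⁻¹)) =
      (w i)⁻¹ * (q b c * x * ((w c)⁻¹ * (w b)⁻¹)) := fun x => by ring
  have hleft : (w i)⁻¹ * (rootedBound q i b c * ((w b)⁻¹ * (w c)⁻¹)) ≤
      (w i)⁻¹ * (q b c * q i b * ((w b)⁻¹ * (w c)⁻¹)) := by
    unfold rootedBound
    gcongr
    exact min_le_left _ _
  have hright : (w i)⁻¹ * (rootedBound q i b c * ((w b)⁻¹ * (w c)⁻¹)) ≤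
      (w i)⁻¹ * (q b c * q i c * ((w b)⁻¹ * (w c)⁻¹)) := by
    unfold rootedBound
    gcongr
    exact min_le_right _ _
  have hright' := hright.trans_eq (hswap _)
  have hcomm : ∀ N, K * (w b * w c) / N = K * (w c * w b) / N := fun N => by ring
  set t := (w i)⁻¹ * (rootedBound q i b c * ((w b)⁻¹ * (w c)⁻¹))
  have hnn1 : 0 ≤ (if B b ∧ w b ≤ √k then w b else 0) := by split_ifs <;> positivity
  have hnn2 : 0 ≤ (if B c ∧ w c ≤ √k then w c else 0) := by split_ifs <;> positivity
  have hnn3 : 0 ≤ (if True ∧ w b ≤ √n then w b else 0) := by split_ifs <;> positivity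
  have hnn4 : 0 ≤ (if True ∧ w c ≤ √n then w c else 0) := by split_ifs <;> positivity
  have hnn5 : (0 : ℝ) ≤ (if B b ∧ √k < w b then 1 else 0) := by split_ifs <;> positivity
  have hnn6 : (0 : ℝ) ≤ (if B c ∧ √k < w c then 1 else 0) := by split_ifs <;> positivity
  have hnn7 : (0 : ℝ) ≤ (if True ∧ √n < w b then 1 else 0) := by split_ifs <;> positivity
  have hnn8 : (0 : ℝ) ≤ (if True ∧ √n < w c then 1 else 0) := by split_ifs <;> positivity
  have hnn9 : (0 : ℝ) ≤ (if B b then 1 else 0) := by split_ifs <;> positivity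
  have hnn10 : (0 : ℝ) ≤ (if B c then 1 else 0) := by split_ifs <;> positivity
  set lb : ℝ := if B b ∧ w b ≤ √k then w b else 0 with hlb
  set lc : ℝ := if B c ∧ w c ≤ √k then w c else 0 with hlc
  set lb' : ℝ := if True ∧ w b ≤ √n then w b else 0 with hlb'
  set lc' : ℝ := if True ∧ w c ≤ √n then w c else 0 with hlc'
  set mb : ℝ := if B b ∧ √k < w b then 1 else 0 with hmb
  set mc : ℝ := if B c ∧ √k < w c then 1 else 0 with hmc
  set mb' : ℝ := if True ∧ √n < w b then 1 else 0 with hmb'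
  set mc' : ℝ := if True ∧ √n < w c then 1 else 0 with hmc'
  set ib : ℝ := if B b then 1 else 0 with hib
  set ic : ℝ := if B c then 1 else 0 with hic
  have hp1 : 0 ≤ lb * ic / (k * k) := by positivity
  have hp2 : 0 ≤ ib * lc / (k * k) := by positivity
  have hp3 : 0 ≤ mb * mc / k := by positivity
  have hp4 : 0 ≤ lb' * 1 / (n * n) := by positivity
  have hp5 : 0 ≤ 1 * lc' / (n * n) := by positivity
  have hp6 : 0 ≤ mb' * mc' / n := by positivity
  have hp7 : 0 ≤ 1 * lc / (n * k) := by positivity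
  have hp8 : 0 ≤ 1 * mc / (n * √k) := by positivity
  have hp9 : 0 ≤ lb * 1 / (n * k) := by positivity
  have hp10 : 0 ≤ mb * 1 / (n * √k) := by positivity
  have hK1 : K ^ 2 ≤ K ^ 2 + K * w0⁻¹ + K := by
    have : 0 ≤ K * w0⁻¹ + K := by positivity
    linarith
  have hK2 : K * w0⁻¹ ≤ K ^ 2 + K * w0⁻¹ + K := by
    have : 0 ≤ K ^ 2 + K := by positivity
    linarith
  have hK3 : K ≤ K ^ 2 + K * w0⁻¹ + K := by
    have : 0 ≤ K ^ 2 + K * w0⁻¹ := by positivity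
    linarith
  have key : ∀ {A X : ℝ}, t ≤ A * X → 0 ≤ A → A ≤ K ^ 2 + K * w0⁻¹ + K → 0 ≤ X →
      X ≤ (lb * ic / (k * k) + ib * lc / (k * k) + mb * mc / k) +
        (lb' * 1 / (n * n) + 1 * lc' / (n * n) + mb' * mc' / n) +
        (1 * lc / (n * k) + 1 * mc / (n * √k)) + (lb * 1 / (n * k) + mb * 1 / (n * √k)) →
      t ≤ (K ^ 2 + K * w0⁻¹ + K) *
        ((lb * ic / (k * k) + ib * lc / (k * k) + mb * mc / k) +
        (lb' * 1 / (n * n) + 1 * lc' / (n * n) + mb' * mc' / n) +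
        (1 * lc / (n * k) + 1 * mc / (n * √k)) + (lb * 1 / (n * k) + mb * 1 / (n * √k))) :=
    fun h1 h2 h3 h4 h5 => h1.trans (mul_le_mul h3 h5 h4 (h2.trans h3))
  have hKK : 0 ≤ K * w0⁻¹ := by positivity
  by_cases hb : B b <;> by_cases hc : B c
  · have hbc : q b c ≤ K * (w b * w c) / k := rankOneBound_le_of_mem hb hc
    rcases le_or_gt (w b) √k with hlt | hlt
    · have := hleft.trans (two_edges_weight_le hwi hwb hwc hk hbc0 hib0 hbc
        (rankOneBound_le_of_mem hi hb))
      refine key this (sq_nonneg K) hK1 (by positivity) ?_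
      have : lb * ic / (k * k) = w b / (k * k) := by
        rw [hlb, hic, if_pos ⟨hb, hlt⟩, if_pos hc, mul_one]
      linarith
    · rcases le_or_gt (w c) √k with hlt' | hlt'
      · have := hright'.trans (two_edges_weight_le hwi hwc hwb hk hbc0 hic0 (hbc.trans_eq (hcomm _))
          (rankOneBound_le_of_mem hi hc))
        refine key this (sq_nonneg K) hK1 (by positivity) ?_
        have : ib * lc / (k * k) = w c / (k * k) := by
          rw [hib, if_pos hb, hlc, if_pos ⟨hc, hlt'⟩, one_mul]
        linarith
      · have := hleft.trans (opposite_edge_weight_le hw0 (h.le_weight i) hwb hwc hbc0 hib1 hbc)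
        refine key this hKK hK2 (by positivity) ?_
        have : mb * mc / k = 1 / k := by
          rw [hmb, hmc, if_pos ⟨hb, hlt⟩, if_pos ⟨hc, hlt'⟩, one_mul]
        linarith
  · have hbc : q b c ≤ K * (w b * w c) / n := rankOneBound_le_of_not fun hbc => hc hbc.2
    rcases le_or_gt (w b) √k with hlt | hlt
    · have := hleft.trans (two_edges_weight_le hwi hwb hwc hk hbc0 hib0 hbc
        (rankOneBound_le_of_mem hi hb))
      refine key this (sq_nonneg K) hK1 (by positivity) ?_
      have : lb * 1 / (n * k) = w b / (n * k) := by
        rw [hlb, if_pos ⟨hb, hlt⟩, mul_one]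
      linarith
    · have := hright'.trans (adjacent_edge_weight_le hwi hwc hsk hlt.le hic0 hbc1
        (rankOneBound_le_of_not fun hic => hc hic.2))
      refine key this hK hK3 (by positivity) ?_
      have : mb * 1 / (n * √k) = 1 / (n * √k) := by
        rw [hmb, if_pos ⟨hb, hlt⟩, mul_one]
      linarith
  · have hbc : q b c ≤ K * (w b * w c) / n := rankOneBound_le_of_not fun hbc => hb hbc.1
    rcases le_or_gt (w c) √k with hlt | hlt
    · have := hright'.trans (two_edges_weight_le hwi hwc hwb hk hbc0 hic0 (hbc.trans_eq (hcomm _))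
        (rankOneBound_le_of_mem hi hc))
      refine key this (sq_nonneg K) hK1 (by positivity) ?_
      have : 1 * lc / (n * k) = w c / (n * k) := by
        rw [hlc, if_pos ⟨hc, hlt⟩, one_mul]
      linarith
    · have := hleft.trans (adjacent_edge_weight_le hwi hwb hsk hlt.le hib0 hbc1
        (rankOneBound_le_of_not fun hib => hb hib.2))
      refine key this hK hK3 (by positivity) ?_
      have : 1 * mc / (n * √k) = 1 / (n * √k) := by
        rw [hmc, if_pos ⟨hc, hlt⟩, mul_one]
      linarith
  · have hbc : q b c ≤ K * (w b * w c) / n := rankOneBound_le_of_not fun hbc => hb hbc.1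
    rcases le_or_gt (w b) √n with hlt | hlt
    · have := hleft.trans (two_edges_weight_le hwi hwb hwc hn hbc0 hib0 hbc
        (rankOneBound_le_of_not fun hib => hb hib.2))
      refine key this (sq_nonneg K) hK1 (by positivity) ?_
      have : lb' * 1 / (n * n) = w b / (n * n) := by
        rw [hlb', if_pos ⟨trivial, hlt⟩, mul_one]
      linarith
    · rcases le_or_gt (w c) √n with hlt' | hlt'
      · have := hright'.trans (two_edges_weight_le hwi hwc hwb hn hbc0 hic0 (hbc.trans_eq (hcomm _))
          (rankOneBound_le_of_not fun hic => hc hic.2))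
        refine key this (sq_nonneg K) hK1 (by positivity) ?_
        have : 1 * lc' / (n * n) = w c / (n * n) := by
          rw [hlc', if_pos ⟨trivial, hlt'⟩, one_mul]
        linarith
      · have := hleft.trans (opposite_edge_weight_le hw0 (h.le_weight i) hwb hwc hbc0 hib1 hbc)
        refine key this hKK hK2 (by positivity) ?_
        have : mb' * mc' / n = 1 / n := by
          rw [hmb', hmc', if_pos ⟨trivial, hlt⟩, if_pos ⟨trivial, hlt'⟩, one_mul]
        linarith

lemma rooted_sum_le (h : CommunityWeights B w k n w0 M) (hK : 0 ≤ K) {i : V} (hi : B i) :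
    (w i)⁻¹ * ∑ b, ∑ c, rootedBound (rankOneBound B w k n K) i b c * ((w b)⁻¹ * (w c)⁻¹) ≤
      (K ^ 2 + K * w0⁻¹ + K) * (8 * M + 2 * M ^ 2) := by
  have hk := h.k_pos
  have hn := h.n_pos
  have hM := h.M_nonneg
  have hsk := Real.sqrt_pos.2 hk
  have hsn := Real.sqrt_pos.2 hn
  have hw0 := h.pos
  have hwp := h.weight_pos
  have hl := h.hubBound_community.sum_light_le (B := B) (by simp)
  have hm := h.hubBound_community.sum_hub_le (B := B) (by simp)
  have hl' : ∑ i, (if True ∧ w i ≤ √n then w i else 0) ≤ M * n := by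
    convert h.hubBound.sum_light_le (B := fun _ => True) (by simp)
  have hm' : ∑ i, (if True ∧ √n < w i then (1 : ℝ) else 0) ≤ M * √n := by
    convert h.hubBound.sum_hub_le (B := fun _ => True) (by simp)
  have hi1 := h.sum_indicator_le
  have h1 := h.sum_one_le
  have hl0 : ∀ v, 0 ≤ if B v ∧ w v ≤ √k then w v else 0 := fun v => by
    have := hwp v
    split_ifs <;> positivity
  have hl0' : ∀ v, 0 ≤ if True ∧ w v ≤ √n then w v else 0 := fun v => by
    have := hwp v
    split_ifs <;> positivity
  have hm0 : ∀ v, (0 : ℝ) ≤ if B v ∧ √k < w v then 1 else 0 := fun v => by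
    split_ifs <;> positivity
  have hm0' : ∀ v, (0 : ℝ) ≤ if True ∧ √n < w v then 1 else 0 := fun v => by
    split_ifs <;> positivity
  have hi0 : ∀ v, (0 : ℝ) ≤ if B v then 1 else 0 := fun v => by
    split_ifs <;> positivity
  have h10 : ∀ _v : V, (0 : ℝ) ≤ 1 := fun _ => zero_le_one
  have hkk : √k * √k = k := Real.mul_self_sqrt hk.le
  have hnn : √n * √n = n := Real.mul_self_sqrt hn.le
  simp only [Finset.mul_sum]
  refine (Finset.sum_le_sum fun b _ => Finset.sum_le_sum fun c _ =>
    h.rooted_weight_le hK hi b c).trans ?_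
  simp only [← Finset.mul_sum, Finset.sum_add_distrib]
  refine mul_le_mul_of_nonneg_left ?_ (by positivity)
  have e1 := sum_sum_mul_div_le _ _ (k * k) _ _ M (by positivity) hl0 hi0 hl hi1 (by nlinarith)
  have e2 := sum_sum_mul_div_le _ _ (k * k) _ _ M (by positivity) hi0 hl0 hi1 hl (by nlinarith)
  have e3 := sum_sum_mul_div_le _ _ k _ _ (M ^ 2) hk hm0 hm0 hm hm (by
    rw [mul_mul_mul_comm, hkk, sq])
  have e4 := sum_sum_mul_div_le _ _ (n * n) _ _ M (by positivity) hl0' h10 hl' h1 (by nlinarith)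
  have e5 := sum_sum_mul_div_le _ _ (n * n) _ _ M (by positivity) h10 hl0' h1 hl' (by nlinarith)
  have e6 := sum_sum_mul_div_le _ _ n _ _ (M ^ 2) hn hm0' hm0' hm' hm' (by
    rw [mul_mul_mul_comm, hnn, sq])
  have e7 := sum_sum_mul_div_le _ _ (n * k) _ _ M (by positivity) h10 hl0 h1 hl (by nlinarith)
  have e8 := sum_sum_mul_div_le _ _ (n * √k) _ _ M (by positivity) h10 hm0 h1 hm (by nlinarith)
  have e9 := sum_sum_mul_div_le _ _ (n * k) _ _ M (by positivity) hl0 h10 hl h1 (by nlinarith)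
  have e10 := sum_sum_mul_div_le _ _ (n * √k) _ _ M (by positivity) hm0 h10 hm h1 (by nlinarith)
  linarith

lemma sum_rooted_sq_le (h : CommunityWeights B w k n w0 M) (hK : 0 ≤ K) :
    ∑ i with B i, ((w i)⁻¹ * ∑ b, ∑ c,
        rootedBound (rankOneBound B w k n K) i b c * ((w b)⁻¹ * (w c)⁻¹)) ^ 2 ≤
      ((K ^ 2 + K * w0⁻¹ + K) * (8 * M + 2 * M ^ 2)) ^ 2 * k := by
  refine (Finset.sum_le_card_nsmul _ _
    (((K ^ 2 + K * w0⁻¹ + K) * (8 * M + 2 * M ^ 2)) ^ 2) fun i hi => ?_).trans ?_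
  · have hwp : ∀ v, 0 ≤ (w v)⁻¹ := fun v => inv_nonneg.2 (h.weight_pos v).le
    refine pow_le_pow_left₀ ?_ (h.rooted_sum_le hK (mem_filter.1 hi).2) 2
    refine mul_nonneg (hwp i) (Finset.sum_nonneg fun b _ => Finset.sum_nonneg fun c _ =>
      mul_nonneg (mul_nonneg (h.rankOneBound_nonneg hK _ _) (le_min (h.rankOneBound_nonneg hK _ _)
        (h.rankOneBound_nonneg hK _ _))) (mul_nonneg (hwp b) (hwp c)))
  · rw [nsmul_eq_mul, mul_comm]
    gcongr
    exact h.card_community_le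

end CommunityWeights

lemma min_weight_le {x y a b c K N : ℝ} (hy : 0 ≤ y) (ha : 0 < a) (hb : 0 < b)
    (hc : 0 < c) (hK : 0 ≤ K) (hN : 0 < N) (hxa : x ≤ K * (a * c) / N)
    (hyb : y ≤ K * (b * c) / N) : min x y * c⁻¹ ≤ K * √(a * b) * (1 / N) := by
  have hs : √(a * b) ^ 2 = a * b := Real.sq_sqrt (by positivity)
  have hle : min x y ≤ K * √(a * b) * c / N := by
    have hz : 0 ≤ K * √(a * b) * c / N := by positivity
    have hmul : x * y ≤ (K * √(a * b) * c / N) ^ 2 := by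
      calc x * y ≤ K * (a * c) / N * (K * (b * c) / N) := by gcongr
        _ = K ^ 2 * (a * b) * c ^ 2 / N ^ 2 := by ring
        _ = K ^ 2 * √(a * b) ^ 2 * c ^ 2 / N ^ 2 := by rw [hs]
        _ = _ := by ring
    by_contra! hlt
    obtain ⟨h1, h2⟩ := lt_min_iff.1 hlt
    nlinarith
  calc _ ≤ K * √(a * b) * c / N * c⁻¹ := by gcongr
    _ = _ := by field_simp

namespace CommunityWeights

variable {V : Type*} [Fintype V] {B : V → Prop} {w : V → ℝ} {k n w0 M K : ℝ}

lemma wedge_le_min (h : CommunityWeights B w k n w0 M) (hK : 0 ≤ K) (a b c : V) :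
    wedgeBound B (rankOneBound B w k n K) a b c ≤
      min (rankOneBound B w k n K a c) (rankOneBound B w k n K b c) := by
  unfold wedgeBound
  split_ifs
  · exact le_min (mul_le_of_le_one_right (h.rankOneBound_nonneg hK _ _) (rankOneBound_le_one _ _))
      (mul_le_of_le_one_left (h.rankOneBound_nonneg hK _ _) (rankOneBound_le_one _ _))
  · exact le_rfl

lemma wedge_nonneg (h : CommunityWeights B w k n w0 M) (hK : 0 ≤ K) (a b c : V) :
    0 ≤ wedgeBound B (rankOneBound B w k n K) a b c := by
  have := h.rankOneBound_nonneg hK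
  unfold wedgeBound
  split_ifs
  · exact mul_nonneg (this _ _) (this _ _)
  · exact le_min (this _ _) (this _ _)

lemma wedge_weight_le (h : CommunityWeights B w k n w0 M) (hK : 0 ≤ K) (a b c : V) :
    wedgeBound B (rankOneBound B w k n K) a b c * (w c)⁻¹ ≤
      K * √(w a * w b) * ((if B c then 1 else 0) / k + 1 / n) := by
  have hwc := h.weight_pos c
  have hk := h.k_pos
  have hn := h.n_pos
  refine (mul_le_mul_of_nonneg_right (h.wedge_le_min hK a b c) (by positivity)).trans ?_
  by_cases hc : B c
  · refine (min_weight_le (h.rankOneBound_nonneg hK _ _)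
      (h.weight_pos a) (h.weight_pos b) hwc hK hk (h.rankOneBound_le hK _ _)
      (h.rankOneBound_le hK _ _)).trans ?_
    rw [if_pos hc]
    gcongr
    have : 0 ≤ 1 / n := by positivity
    linarith
  · refine (min_weight_le (h.rankOneBound_nonneg hK _ _)
      (h.weight_pos a) (h.weight_pos b) hwc hK hn (rankOneBound_le_of_not fun hac => hc hac.2)
      (rankOneBound_le_of_not fun hbc => hc hbc.2)).trans ?_
    rw [if_neg hc, zero_div, zero_add]

lemma wedge_sum_le (h : CommunityWeights B w k n w0 M) (hK : 0 ≤ K) (a b : V) :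
    ∑ c, wedgeBound B (rankOneBound B w k n K) a b c * (w c)⁻¹ ≤ 2 * K * √(w a * w b) := by
  have hk := h.k_pos
  have hn := h.n_pos
  refine (Finset.sum_le_sum fun c _ => h.wedge_weight_le hK a b c).trans ?_
  rw [← Finset.mul_sum, Finset.sum_add_distrib, ← Finset.sum_div, ← Finset.sum_div]
  have h1 : (∑ i, (if B i then (1 : ℝ) else 0)) / k ≤ 1 := (div_le_one hk).2 h.sum_indicator_le
  have h2 : (∑ _i : V, (1 : ℝ)) / n ≤ 1 := (div_le_one hn).2 h.sum_one_le
  calc _ ≤ K * √(w a * w b) * (1 + 1) := by gcongr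
    _ = _ := by ring

lemma wedge_sq_sum_le (h : CommunityWeights B w k n w0 M) (hK : 0 ≤ K) (a b : V) :
    ∑ c, wedgeBound B (rankOneBound B w k n K) a b c * (w c)⁻¹ ^ 2 ≤
      2 * K * (w0⁻¹ ^ 2 * (w a * w b)) := by
  have hw0 := h.pos
  have ha := h.weight_pos a
  have hb := h.weight_pos b
  have hs : √(w a * w b) ≤ w0⁻¹ * (w a * w b) := by
    have h1 : w0 ≤ √(w a * w b) := by
      refine Real.le_sqrt_of_sq_le ?_
      rw [sq]
      have := h.le_weight a
      have := h.le_weight b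
      gcongr
    have h2 : √(w a * w b) * √(w a * w b) = w a * w b := Real.mul_self_sqrt (by positivity)
    rw [← div_eq_inv_mul, le_div_iff₀ hw0]
    nlinarith [Real.sqrt_nonneg (w a * w b)]
  calc _ ≤ ∑ c, w0⁻¹ * (wedgeBound B (rankOneBound B w k n K) a b c * (w c)⁻¹) := by
        refine Finset.sum_le_sum fun c _ => ?_
        have hc := h.weight_pos c
        have := h.wedge_nonneg hK a b c
        have : (w c)⁻¹ ≤ w0⁻¹ := by
          have := h.le_weight c
          gcongr
        calc _ = (w c)⁻¹ * (wedgeBound B (rankOneBound B w k n K) a b c * (w c)⁻¹) := by ring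
          _ ≤ _ := by gcongr
    _ ≤ w0⁻¹ * (2 * K * (w0⁻¹ * (w a * w b))) := by
        rw [← Finset.mul_sum]
        gcongr
        exact (h.wedge_sum_le hK a b).trans (by gcongr)
    _ = _ := by ring

lemma wedge_moment_le {x q S S' N D D' : ℝ} (hx : 0 < x) (hq : 0 ≤ q) (hD : 0 ≤ D) (hD' : 0 ≤ D')
    (hqN : q ≤ K * x / N) (hS : S ≤ D * x) (hS' : S' ≤ D' * x) :
    x⁻¹ ^ 2 * q * (S + S') ≤ (D + D') * K * (1 / N) := by
  calc _ ≤ x⁻¹ ^ 2 * q * (D * x + D' * x) := by gcongr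
    _ ≤ x⁻¹ ^ 2 * (K * x / N) * (D * x + D' * x) := by gcongr
    _ = _ := by field_simp

lemma community_wedge_moment_le (h : CommunityWeights B w k n w0 M) (hK : 0 ≤ K) {a b : V} {N : ℝ}
    (hN : rankOneBound B w k n K a b ≤ K * (w a * w b) / N) :
    ((w a)⁻¹ * (w b)⁻¹) ^ 2 * rankOneBound B w k n K a b *
        (∑ c, wedgeBound B (rankOneBound B w k n K) a b c * (w c)⁻¹ ^ 2 +
          (∑ c, wedgeBound B (rankOneBound B w k n K) a b c * (w c)⁻¹) ^ 2) ≤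
      (2 * K * w0⁻¹ ^ 2 + 4 * K ^ 2) * K * (1 / N) := by
  have ha := h.weight_pos a
  have hb := h.weight_pos b
  have hw0 := h.pos
  rw [← mul_inv]
  refine wedge_moment_le (by positivity) (h.rankOneBound_nonneg hK _ _) (by positivity)
    (by positivity) hN ((h.wedge_sq_sum_le hK a b).trans_eq (by ring)) ?_
  have hs : √(w a * w b) ^ 2 = w a * w b := Real.sq_sqrt (by positivity)
  calc _ ≤ (2 * K * √(w a * w b)) ^ 2 := by
        refine pow_le_pow_left₀ (Finset.sum_nonneg fun c _ => ?_) (h.wedge_sum_le hK a b) 2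
        have := h.wedge_nonneg hK a b c
        have := h.weight_pos c
        positivity
    _ = 4 * K ^ 2 * √(w a * w b) ^ 2 := by ring
    _ = _ := by rw [hs]

lemma outside_wedge_moment_le (h : CommunityWeights B w k n w0 M) (hK : 0 ≤ K) {a b : V}
    (ha : ¬B a) (hb : ¬B b) :
    ((w a)⁻¹ * (w b)⁻¹) ^ 2 * rankOneBound B w k n K a b *
        (∑ c, wedgeBound B (rankOneBound B w k n K) a b c * (w c)⁻¹ ^ 2 +
          (∑ c, wedgeBound B (rankOneBound B w k n K) a b c * (w c)⁻¹) ^ 2) ≤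
      (K ^ 3 + 2 * K ^ 3 * M ^ 2 + 2 * K ^ 4 * M ^ 2) * (1 * 1 / (n * n)) := by
  have hn := h.n_pos
  have hsn := Real.sqrt_pos.2 hn
  have hnn : √n ^ 2 = n := Real.sq_sqrt hn.le
  have hM := h.M_nonneg
  have hwa := h.weight_pos a
  have hwb := h.weight_pos b
  have hs : √(w a * w b) ^ 2 = w a * w b := Real.sq_sqrt (by positivity)
  have hq : ∀ c, rankOneBound B w k n K a c ≤ K * (w a * w c) / n := fun c =>
    rankOneBound_le_of_not fun hac => ha hac.1
  have hq' : ∀ c, rankOneBound B w k n K b c ≤ K * (w b * w c) / n := fun c =>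
    rankOneBound_le_of_not fun hbc => hb hbc.1
  have hq0 := h.rankOneBound_nonneg hK
  have hw2 : ∀ c, wedgeBound B (rankOneBound B w k n K) a b c ≤
      K ^ 2 * (w a * w b) / (n * n) * w c ^ 2 := fun c => by
    rw [wedgeBound, if_pos ⟨ha, hb⟩]
    have := h.weight_pos c
    calc _ ≤ K * (w a * w c) / n * (K * (w b * w c) / n) :=
          mul_le_mul (hq c) (hq' c) (hq0 _ _) (by positivity)
      _ = _ := by field_simp
  have hsum2 : ∑ c, wedgeBound B (rankOneBound B w k n K) a b c * (w c)⁻¹ ^ 2 ≤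
      K ^ 2 / n * (w a * w b) := by
    calc _ ≤ ∑ _c : V, K ^ 2 * (w a * w b) / (n * n) * 1 := by
          refine Finset.sum_le_sum fun c _ => ?_
          have := h.weight_pos c
          calc _ ≤ K ^ 2 * (w a * w b) / (n * n) * w c ^ 2 * (w c)⁻¹ ^ 2 := by
                gcongr
                exact hw2 c
            _ = _ := by field_simp
      _ ≤ K ^ 2 * (w a * w b) / (n * n) * n := by
          rw [← Finset.mul_sum]
          gcongr
          exact h.sum_one_le
      _ = _ := by field_simp
  have hsum1 : ∑ c, wedgeBound B (rankOneBound B w k n K) a b c * (w c)⁻¹ ≤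
      K ^ 2 * (w a * w b) / (n * n) * (M * n) + K * √(w a * w b) * (1 / n) * (M * √n) := by
    have hl : ∑ i, (if True ∧ w i ≤ √n then w i else 0) ≤ M * n := by
      convert h.hubBound.sum_light_le (B := fun _ => True) (by simp)
    have hm : ∑ i, (if True ∧ √n < w i then (1 : ℝ) else 0) ≤ M * √n := by
      convert h.hubBound.sum_hub_le (B := fun _ => True) (by simp)
    calc _ ≤ ∑ c, (K ^ 2 * (w a * w b) / (n * n) * (if True ∧ w c ≤ √n then w c else 0) +
          K * √(w a * w b) * (1 / n) * (if True ∧ √n < w c then (1 : ℝ) else 0)) := by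
          refine Finset.sum_le_sum fun c _ => ?_
          have hc := h.weight_pos c
          rcases le_or_gt (w c) √n with hlt | hlt
          · rw [if_pos ⟨trivial, hlt⟩, if_neg fun hh => hlt.not_gt hh.2, mul_zero, add_zero]
            calc _ ≤ K ^ 2 * (w a * w b) / (n * n) * w c ^ 2 * (w c)⁻¹ := by
                  gcongr
                  exact hw2 c
              _ = _ := by field_simp
          · rw [if_neg fun hh => hlt.not_ge hh.2, if_pos ⟨trivial, hlt⟩, mul_zero, zero_add,
              mul_one]
            refine (mul_le_mul_of_nonneg_right (h.wedge_le_min hK a b c) (by positivity)).trans ?_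
            exact min_weight_le (hq0 _ _) hwa hwb hc hK hn (hq c) (hq' c)
      _ ≤ _ := by
          rw [Finset.sum_add_distrib, ← Finset.mul_sum, ← Finset.mul_sum]
          gcongr
  have hsq : (∑ c, wedgeBound B (rankOneBound B w k n K) a b c * (w c)⁻¹) ^ 2 ≤
      2 * K ^ 4 * M ^ 2 / (n * n) * (w a * w b) ^ 2 + 2 * K ^ 2 * M ^ 2 / n * (w a * w b) := by
    have h0 : 0 ≤ ∑ c, wedgeBound B (rankOneBound B w k n K) a b c * (w c)⁻¹ :=
      Finset.sum_nonneg fun c _ =>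
        mul_nonneg (h.wedge_nonneg hK a b c) (inv_nonneg.2 (h.weight_pos c).le)
    calc _ ≤ (K ^ 2 * (w a * w b) / (n * n) * (M * n) +
          K * √(w a * w b) * (1 / n) * (M * √n)) ^ 2 := pow_le_pow_left₀ h0 hsum1 2
      _ ≤ 2 * ((K ^ 2 * (w a * w b) / (n * n) * (M * n)) ^ 2 +
          (K * √(w a * w b) * (1 / n) * (M * √n)) ^ 2) := add_sq_le
      _ = 2 * ((K ^ 2 * (w a * w b) / (n * n) * (M * n)) ^ 2 +
          K ^ 2 * √(w a * w b) ^ 2 * (1 / n) ^ 2 * (M ^ 2 * √n ^ 2)) := by ring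
      _ = _ := by
          rw [hs, hnn]
          field_simp
  have hab := hq0 a b
  rw [← mul_inv]
  calc _ ≤ (w a * w b)⁻¹ ^ 2 * rankOneBound B w k n K a b * (K ^ 2 / n * (w a * w b) +
        (2 * K ^ 4 * M ^ 2 / (n * n) * (w a * w b) ^ 2 + 2 * K ^ 2 * M ^ 2 / n * (w a * w b))) := by
        gcongr
    _ = (w a * w b)⁻¹ ^ 2 * rankOneBound B w k n K a b *
          ((K ^ 2 + 2 * K ^ 2 * M ^ 2) / n * (w a * w b)) +
        (w a * w b)⁻¹ ^ 2 * rankOneBound B w k n K a b *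
          (2 * K ^ 4 * M ^ 2 / (n * n) * (w a * w b) ^ 2) := by ring
    _ ≤ (w a * w b)⁻¹ ^ 2 * (K * (w a * w b) / n) *
          ((K ^ 2 + 2 * K ^ 2 * M ^ 2) / n * (w a * w b)) +
        (w a * w b)⁻¹ ^ 2 * 1 * (2 * K ^ 4 * M ^ 2 / (n * n) * (w a * w b) ^ 2) := by
        gcongr
        · exact hq b
        · exact rankOneBound_le_one _ _
    _ = _ := by field_simp

lemma sum_wedge_moment_le (h : CommunityWeights B w k n w0 M) (hK : 0 ≤ K) :
    ∑ a, ∑ b, ((w a)⁻¹ * (w b)⁻¹) ^ 2 * rankOneBound B w k n K a b *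
        (∑ c, wedgeBound B (rankOneBound B w k n K) a b c * (w c)⁻¹ ^ 2 +
          (∑ c, wedgeBound B (rankOneBound B w k n K) a b c * (w c)⁻¹) ^ 2) ≤
      ((2 * K * w0⁻¹ ^ 2 + 4 * K ^ 2) * K * 3 +
        (K ^ 3 + 2 * K ^ 3 * M ^ 2 + 2 * K ^ 4 * M ^ 2)) * k := by
  have hk := h.k_pos
  have hn := h.n_pos
  have hM := h.M_nonneg
  have hw0 := h.pos
  set D := (2 * K * w0⁻¹ ^ 2 + 4 * K ^ 2) * K with hD
  set D' := K ^ 3 + 2 * K ^ 3 * M ^ 2 + 2 * K ^ 4 * M ^ 2 with hD'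
  have hD0 : 0 ≤ D := by positivity
  have hD0' : 0 ≤ D' := by positivity
  have hi0 : ∀ v, (0 : ℝ) ≤ if B v then 1 else 0 := fun v => by
    split_ifs <;> positivity
  have h10 : ∀ _v : V, (0 : ℝ) ≤ 1 := fun _ => zero_le_one
  have hpt : ∀ a b, ((w a)⁻¹ * (w b)⁻¹) ^ 2 * rankOneBound B w k n K a b *
        (∑ c, wedgeBound B (rankOneBound B w k n K) a b c * (w c)⁻¹ ^ 2 +
          (∑ c, wedgeBound B (rankOneBound B w k n K) a b c * (w c)⁻¹) ^ 2) ≤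
      D * ((if B a then 1 else 0) * (if B b then 1 else 0) / k + (if B a then 1 else 0) * 1 / n +
        1 * (if B b then 1 else 0) / n) + D' * (1 * 1 / (n * n)) := by
    intro a b
    have hz : 0 ≤ D' * (1 * 1 / (n * n)) := by positivity
    by_cases ha : B a <;> by_cases hb : B b
    · refine (h.community_wedge_moment_le hK (rankOneBound_le_of_mem ha hb)).trans ?_
      rw [if_pos ha, if_pos hb, ← hD, mul_add, mul_add, one_mul]
      rw [one_mul] at hz
      have : 0 ≤ D * (1 / n) := by positivity
      linarith
    · refine (h.community_wedge_moment_le hK (rankOneBound_le_of_not fun hab => hb hab.2)).trans ?_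
      rw [if_pos ha, if_neg hb, ← hD]
      simp only [mul_zero, zero_div, zero_add, add_zero, one_mul]
      linarith
    · refine (h.community_wedge_moment_le hK (rankOneBound_le_of_not fun hab => ha hab.1)).trans ?_
      rw [if_neg ha, if_pos hb, ← hD]
      simp only [zero_mul, zero_div, zero_add, one_mul]
      linarith
    · refine (h.outside_wedge_moment_le hK ha hb).trans ?_
      rw [if_neg ha, if_neg hb, ← hD']
      simp
  refine (Finset.sum_le_sum fun a _ => Finset.sum_le_sum fun b _ => hpt a b).trans ?_
  simp only [Finset.sum_add_distrib, ← Finset.mul_sum]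
  have hi1 := h.sum_indicator_le
  have h1 := h.sum_one_le
  have e1 := sum_sum_mul_div_le _ _ k _ _ k hk hi0 hi0 hi1 hi1 le_rfl
  have e2 := sum_sum_mul_div_le _ _ n _ _ k hn hi0 h10 hi1 h1 le_rfl
  have e3 := sum_sum_mul_div_le _ _ n _ _ k hn h10 hi0 h1 hi1 (mul_comm _ _).le
  have e4 := sum_sum_mul_div_le _ _ (n * n) _ _ 1 (by positivity) h10 h10 h1 h1 (by simp)
  calc _ ≤ D * (k + k + k) + D' * 1 := by gcongr
    _ ≤ D * (k + k + k) + D' * k := by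
      have := h.one_le
      gcongr
    _ = _ := by ring

end CommunityWeights

/-- The projection of a position to the cube `[0,1]^d`. -/
def cubeClamp (d : ℕ) (v : Fin d → ℝ) : Fin d → ℝ := (v ⊓ 1) ⊔ 0

lemma cubeClamp_mem (d : ℕ) (v : Fin d → ℝ) : cubeClamp d v ∈ Set.Icc (0 : Fin d → ℝ) 1 :=
  ⟨le_sup_right, sup_le inf_le_right zero_le_one⟩

lemma cubeClamp_of_mem {d : ℕ} {v : Fin d → ℝ} (hv : v ∈ Set.Icc (0 : Fin d → ℝ) 1) :
    cubeClamp d v = v := by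
  rw [cubeClamp, inf_eq_left.2 hv.2, sup_eq_left.2 hv.1]

lemma measurable_cubeClamp (d : ℕ) : Measurable (cubeClamp d) := by
  refine measurable_pi_iff.2 fun i => ?_
  change Measurable fun v : Fin d → ℝ => max (min (v i) 1) 0
  fun_prop

lemma ae_mem_unifCube (d : ℕ) : ∀ᵐ v ∂unifCube d, v ∈ Set.Icc (0 : Fin d → ℝ) 1 :=
  ae_restrict_mem measurableSet_Icc

lemma muPar_pos {τ C w0 : ℝ} (hτ : 2 < τ) (hC : 0 < C) (hw0 : 0 < w0) : 0 < muPar τ C w0 := by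
  have h1 : 0 < τ - 1 := by linarith
  have h2 : 0 < τ - 2 := by linarith
  unfold muPar
  positivity

/-- The connection probabilities of the alternative model, with positions projected to the cube. -/
def clampedProb (n k d : ℕ) (γ μ : ℝ) (w : Fin n → ℝ) (x : Fin n → Fin d → ℝ) (i j : Fin n) : ℝ :=
  pH1 n k d γ μ w (fun v => cubeClamp d (x v)) i j

lemma C1_pos (d : ℕ) {γ : ℝ} (hγ : 1 < γ) : 0 < C1 d γ := by
  have : 0 < γ - 1 := by linarith
  unfold C1
  positivity

lemma inv_one_add_C1_pos (d : ℕ) {γ : ℝ} (hγ : 1 < γ) : 0 < (1 + C1 d γ)⁻¹ := by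
  have := C1_pos d hγ
  positivity

lemma inv_one_add_C1_le_one (d : ℕ) {γ : ℝ} (hγ : 1 < γ) : (1 + C1 d γ)⁻¹ ≤ 1 :=
  inv_le_one_of_one_le₀ (by linarith [C1_pos d hγ])

section Kernel

variable {n k d : ℕ} {γ μ : ℝ} {w : Fin n → ℝ}

lemma min_div_torusDist_nonneg (hμ : 0 < μ) {a b : ℝ} (ha : 0 ≤ a) (hb : 0 ≤ b) {x y : Fin d → ℝ}
    (hx : x ∈ Set.Icc (0 : Fin d → ℝ) 1) (hy : y ∈ Set.Icc (0 : Fin d → ℝ) 1) :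
    0 ≤ min (a * b / (μ * k * torusDist d x y ^ d)) 1 := by
  have := torusDist_nonneg hx hy
  positivity

lemma pGIRG_le_one (hγ : 1 < γ) (hμ : 0 < μ) {a b : ℝ} (ha : 0 ≤ a) (hb : 0 ≤ b) {x y : Fin d → ℝ}
    (hx : x ∈ Set.Icc (0 : Fin d → ℝ) 1) (hy : y ∈ Set.Icc (0 : Fin d → ℝ) 1) :
    pGIRG k d γ μ a b x y ≤ 1 :=
  Real.rpow_le_one (min_div_torusDist_nonneg hμ ha hb hx hy) (min_le_right _ _) (by linarith)

lemma clampedProb_le_one (hγ : 1 < γ) (hμ : 0 < μ) (hw : ∀ i, 0 ≤ w i) (x : Fin n → Fin d → ℝ)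
    (i j : Fin n) : clampedProb n k d γ μ w x i j ≤ 1 := by
  have h0 := (inv_one_add_C1_pos d hγ).le
  have h1 := inv_one_add_C1_le_one d hγ
  unfold clampedProb pH1
  split_ifs
  · exact (mul_le_of_le_one_right h0 (pGIRG_le_one hγ hμ (hw i) (hw j) (cubeClamp_mem _ _)
      (cubeClamp_mem _ _))).trans h1
  · exact (mul_le_of_le_one_right h0 (min_le_right _ _)).trans h1

lemma clampedProb_le_rankOneBound (hγ : 1 < γ) (hμ : 0 < μ) (hw : ∀ i, 0 < w i) (G : ℝ)
    (x : Fin n → Fin d → ℝ) (i j : Fin n) (hij : ¬(i.val < k ∧ j.val < k)) :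
    clampedProb n k d γ μ w x i j ≤
      rankOneBound (fun i : Fin n => i.val < k) w k n (max 1 G / μ) i j := by
  have := hw i
  have := hw j
  unfold clampedProb pH1 pIRG rankOneBound
  rw [if_neg hij, if_neg hij]
  refine (mul_le_of_le_one_left (by positivity) (inv_one_add_C1_le_one d hγ)).trans ?_
  refine min_le_min_right _ ?_
  calc _ = 1 / μ * (w i * w j) / n := by field_simp
    _ ≤ _ := by
      gcongr
      exact le_max_left _ _

lemma positionKernel_clampedProb (hγ : 1 < γ) (hμ : 0 < μ) (hw : ∀ i, 0 < w i) (hk : 0 < k)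
    (hn : 0 < n) {G : ℝ} (hG : ∀ s > 0, ∀ x ∈ Set.Icc (0 : Fin d → ℝ) 1,
      ∫⁻ y, ENNReal.ofReal ((min (s / torusDist d x y ^ d) 1) ^ γ) ∂unifCube d ≤
        ENNReal.ofReal (G * s)) :
    PositionKernel (unifCube d) (fun i : Fin n => i.val < k)
      (rankOneBound (fun i : Fin n => i.val < k) w k n (max 1 G / μ))
      (clampedProb n k d γ μ w) where
  measurable i j := by
    unfold clampedProb pH1
    split_ifs
    · unfold pGIRG
      have hm : Measurable fun x : Fin n → Fin d → ℝ =>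
          torusDist d (cubeClamp d (x i)) (cubeClamp d (x j)) :=
        (measurable_torusDist d).comp
          (((measurable_cubeClamp d).comp (measurable_pi_apply i)).prodMk
            ((measurable_cubeClamp d).comp (measurable_pi_apply j)))
      fun_prop
    · exact measurable_const
  le_one := clampedProb_le_one hγ hμ fun i => (hw i).le
  symm x i j := by
    unfold clampedProb pH1 pGIRG pIRG
    simp only [torusDist_comm _ (cubeClamp d (x i)), mul_comm (w i), and_comm (a := i.val < k)]
  congr x y i j h := by
    unfold clampedProb pH1
    split_ifs with hij
    · simp only [(h hij.1 hij.2).1, (h hij.1 hij.2).2]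
    · rfl
  q_nonneg i j := by
    have := hw i
    have := hw j
    unfold rankOneBound
    split_ifs <;> positivity
  q_symm i j := by
    simp only [rankOneBound, mul_comm (w i) (w j), and_comm (a := i.val < k) (b := j.val < k)]
    congr
  le_of_not := clampedProb_le_rankOneBound hγ hμ hw G
  lintegral_le x i j hne := by
    have hi := hw i
    have hj := hw j
    have hk' : (0 : ℝ) < k := by exact_mod_cast hk
    by_cases hij : i.val < k ∧ j.val < k
    · rw [rankOneBound, ENNReal.ofReal_min, ENNReal.ofReal_one]
      refine le_min ?_ ?_
      · calc _ ≤ ∫⁻ y, ENNReal.ofReal ((min (w i * w j / (μ * k) /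
              torusDist d (cubeClamp d (x i)) y ^ d) 1) ^ γ) ∂unifCube d := by
              refine lintegral_mono_ae ?_
              filter_upwards [ae_mem_unifCube d] with y hy
              refine ENNReal.ofReal_le_ofReal ?_
              unfold clampedProb pH1
              rw [if_pos hij]
              simp only [Function.update_self, Function.update_of_ne hne, cubeClamp_of_mem hy]
              refine (mul_le_of_le_one_left ?_ (inv_one_add_C1_le_one d hγ)).trans_eq ?_
              · exact Real.rpow_nonneg
                  (min_div_torusDist_nonneg hμ hi.le hj.le (cubeClamp_mem _ _) hy) _
              · rw [pGIRG, div_div]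
          _ ≤ ENNReal.ofReal (G * (w i * w j / (μ * k))) :=
              hG _ (by positivity) _ (cubeClamp_mem _ _)
          _ ≤ _ := by
              refine ENNReal.ofReal_le_ofReal ?_
              rw [if_pos hij]
              calc _ ≤ max 1 G * (w i * w j / (μ * k)) := by
                    gcongr
                    exact le_max_right _ _
                _ = _ := by field_simp
      · calc _ ≤ ∫⁻ _y, 1 ∂unifCube d := by
              refine lintegral_mono fun y => ?_
              exact ENNReal.ofReal_le_one.2 (clampedProb_le_one hγ hμ (fun i => (hw i).le) _ _ _)
          _ = 1 := by simp
    · calc _ ≤ ∫⁻ _y, ENNReal.ofReal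
            (rankOneBound (fun i : Fin n => i.val < k) w k n (max 1 G / μ) i j) ∂unifCube d :=
            lintegral_mono fun y => ENNReal.ofReal_le_ofReal
              (clampedProb_le_rankOneBound hγ hμ hw G _ _ _ hij)
        _ = _ := by simp

lemma triH1_iff_mem_triangleEvent {ω : H1Space n d} (hω : ∀ i, ω.1 i ∈ Set.Icc (0 : Fin d → ℝ) 1)
    (hsymm : ∀ x i j, clampedProb n k d γ μ w x i j = clampedProb n k d γ μ w x j i)
    (a b c : Fin n) :
    triH1 n k d γ μ w ω a b c ↔ ω ∈ triangleEvent (clampedProb n k d γ μ w) ![a, b, c] := by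
  have hx : (fun v => cubeClamp d (ω.1 v)) = ω.1 := funext fun v => cubeClamp_of_mem (hω v)
  have hp : ∀ i j, pH1 n k d γ μ w ω.1 i j = clampedProb n k d γ μ w ω.1 i j := fun i j => by
    rw [clampedProb, hx]
  have he : ∀ i j, edgeH1 n k d γ μ w ω i j ↔
      i ≠ j ∧ ω.2 (i ⊓ j) (i ⊔ j) ≤ clampedProb n k d γ μ w ω.1 i j := fun i j => by
    rw [← hp]
    rfl
  have hs : ∀ i j, (i ≠ j ∧ ω.2 (i ⊓ j) (i ⊔ j) ≤ clampedProb n k d γ μ w ω.1 i j) ↔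
      j ≠ i ∧ ω.2 (j ⊓ i) (j ⊔ i) ≤ clampedProb n k d γ μ w ω.1 j i := fun i j => by
    rw [ne_comm, inf_comm, sup_comm, hsymm]
  unfold triH1
  rw [he, he, he]
  change _ ↔ ∀ i j : Fin 3, i ≠ j → _
  simp only [Fin.forall_fin_succ, Fin.forall_fin_zero]
  simp
  have := hs a b
  have := hs b c
  have := hs c a
  tauto

end Kernel

/-- The bound for the variance of the weighted number of triangles, up to the factor `k`. -/
def varianceConst (K w0 M : ℝ) : ℝ :=
  36 * (((2 * K * w0⁻¹ ^ 2 + 4 * K ^ 2) * K * 3 +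
    (K ^ 3 + 2 * K ^ 3 * M ^ 2 + 2 * K ^ 4 * M ^ 2)) +
      ((K ^ 2 + K * w0⁻¹ + K) * (8 * M + 2 * M ^ 2)) ^ 2)

lemma variance_WH1_le {n k d : ℕ} {γ μ w0 M G : ℝ} {w : Fin n → ℝ} (hγ : 1 < γ) (hμ : 0 < μ)
    (hk : 1 ≤ k) (hkn : k ≤ n) (hw0 : 0 < w0) (hw : ∀ i, w0 ≤ w i)
    (hG : ∀ s > 0, ∀ x ∈ Set.Icc (0 : Fin d → ℝ) 1,
      ∫⁻ y, ENNReal.ofReal ((min (s / torusDist d x y ^ d) 1) ^ γ) ∂unifCube d ≤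
        ENNReal.ofReal (G * s))
    (hM : HubBound univ w n M)
    (hM' : HubBound (univ.filter fun i : Fin n => i.val < k) w k M) :
    variance (WH1 n k d γ μ w) (H1Measure n d) ≤ varianceConst (max 1 G / μ) w0 M * k := by
  have hwpos : ∀ i, 0 < w i := fun i => hw0.trans_le (hw i)
  have hker := positionKernel_clampedProb (d := d) hγ hμ hwpos hk (hk.trans hkn) hG
  have hae : WH1 n k d γ μ w =ᵐ[H1Measure n d] triangleStat (clampedProb n k d γ μ w) w := by
    have hpos : ∀ᵐ x ∂(Measure.pi fun _ : Fin n => unifCube d),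
        ∀ i, x i ∈ Set.Icc (0 : Fin d → ℝ) 1 :=
      ae_all_iff.2 fun i =>
        (Measure.quasiMeasurePreserving_eval (fun _ : Fin n => unifCube d) i).ae (ae_mem_unifCube d)
    have hpos' := Measure.quasiMeasurePreserving_fst
      (ν := Measure.pi fun _ : Fin n => Measure.pi fun _ : Fin n => unifI) |>.ae hpos
    filter_upwards [hpos'] with ω hω
    unfold WH1 triangleStat
    rw [sum_fin_three]
    refine sum_congr rfl fun a _ => sum_congr rfl fun b _ => sum_congr rfl fun c _ => ?_
    simp only [triH1_iff_mem_triangleEvent hω hker.symm, Set.indicator_apply, triWeight_cons,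
      mul_inv]
  have hcw : CommunityWeights (fun i : Fin n => i.val < k) w k n w0 M :=
    { one_le := by exact_mod_cast hk
      le := by exact_mod_cast hkn
      card_le := by simp
      card_community_le := by
        have h : #{i : Fin n | i.val < k} ≤ k := by
          rw [← card_map Fin.valEmbedding]
          refine (card_le_card ?_).trans_eq (card_range k)
          intro i hi
          simp only [Finset.mem_map, mem_filter] at hi
          obtain ⟨j, hj, rfl⟩ := hi
          exact mem_range.2 hj.2
        refine le_trans (le_of_eq ?_) (Nat.cast_le.2 h)
        congr
      pos := hw0
      le_weight := hw
      hubBound := hM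
      hubBound_community := by convert hM' }
  have hK : 0 ≤ max 1 G / μ := by positivity
  rw [variance_congr hae]
  refine (hker.variance_triangleStat_le fun i => (hwpos i).le).trans ?_
  have h1 := hker.sum_overlapMoment_le fun i => (hwpos i).le
  have h2 := hcw.sum_wedge_moment_le hK
  have h3 := hcw.sum_rooted_sq_le hK
  unfold varianceConst
  linarith

/-- Proposition 5.4 (variance): under `H₁` with `k → ∞`, `k = o(n)`,
the variance of the weighted triangle statistic satisfies `Var₁(W) = O(k)`. -/
theorem variance_weighted_triangles_H1
    (τ C w0 : ℝ) (hτ1 : 2 < τ) (hτ2 : τ < 3) (hC : 0 < C) (hw0 : 0 < w0)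
    (hCw : C = w0 ^ (τ - 1))
    (γ : ℝ) (hγ : 1 < γ) (d : ℕ) (hd : 1 ≤ d)
    (k : ℕ → ℕ) (hkn : ∀ n, k n ≤ n)
    (hko : (fun n : ℕ => (k n : ℝ)) =o[atTop] fun n : ℕ => (n : ℝ))
    (hkinf : Tendsto (fun n => k n) atTop atTop)
    (w : (n : ℕ) → Fin n → ℝ) (hww0 : ∀ n (i : Fin n), w0 ≤ w n i)
    (hA1 : Assumption1 τ C w0 w)
    (hA2 : Assumption2 τ C w0 k w)
    :
    (fun n : ℕ => variance (WH1 n (k n) d γ (muPar τ C w0) (w n)) (H1Measure n d))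
      =O[atTop] (fun n : ℕ => (k n : ℝ)) := by
  obtain ⟨G, -, hG⟩ := exists_lintegral_pGIRG_le hd hγ
  obtain ⟨M, -, hM⟩ := exists_hubBound hτ1 hτ2 hC hw0 hkn hkinf hww0 hA1 hA2
  refine IsBigO.of_bound (varianceConst (max 1 G / muPar τ C w0) w0 M) ?_
  filter_upwards [hM, hkinf.eventually_ge_atTop 1] with n hn hk
  rw [Real.norm_of_nonneg (variance_nonneg _ _), Real.norm_of_nonneg (Nat.cast_nonneg _)]
  exact variance_WH1_le hγ (muPar_pos hτ1 hC hw0) hk (hkn n) hw0 (hww0 n) hG hn.1 hn.2
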